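/- arXiv:1612.03229 — 4 statements merged into one kernel-verified Lean document; each statement's English description precedes it below -/
import Mathlib

section
/- Let O be the order of conductor f in an imaginary quadratic field, and let ℓ^a > 2 be a prime power with ℓ not dividing f and ℓ split in O. Then the set of elements of O/ℓ^a O of additive order ℓ^a decomposes into exactly 2a+1 orbits under the multiplication action of (O/ℓ^a O)^×: two orbits of cardinality ℓ^{a−1}(ℓ−1); for each 1 ≤ i ≤ a−1, two orbits of cardinality ℓ^{a+i−2}(ℓ−1)²; and one orbit of cardinality ℓ^{2a−2}(ℓ−1)². -/
set_option synthInstance.maxHeartbeats 1000000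
set_option maxHeartbeats 1000000

open NumberField

/-- `K` is an imaginary quadratic field: a number field of degree `2` over `ℚ`
with no real embedding. -/
def IsImagQuadratic (K : Type*) [Field K] [NumberField K] : Prop :=
  Module.finrank ℚ K = 2 ∧ IsEmpty (K →+* ℝ)

/-- `O = ℤ + f·𝓞_K` is the order of conductor `f` in the number field `K`,
viewed as a subalgebra of `K`. -/
def IsOrderOfConductor (K : Type*) [Field K] [NumberField K] (f : ℕ)
    (O : Subalgebra ℤ K) : Prop :=
  ∀ x : K, x ∈ O ↔ ∃ (a : ℤ) (y : 𝓞 K), x = (a : K) + (f : K) * (algebraMap (𝓞 K) K y)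

/-- The prime `ℓ` is *split* in the ring `R`: `R/ℓR ≅ ℤ/ℓ × ℤ/ℓ` as rings. -/
def SplitsIn (R : Type*) [CommRing R] (ℓ : ℕ) : Prop :=
  Nonempty ((R ⧸ Ideal.span {(ℓ : R)}) ≃+* ZMod ℓ × ZMod ℓ)

/-- The prime `ℓ` is *inert* in the ring `R`: `R/ℓR` is a field. -/
def InertIn (R : Type*) [CommRing R] (ℓ : ℕ) : Prop :=
  IsField (R ⧸ Ideal.span {(ℓ : R)})

/-!
Splitting of `ℓ` provides comaximal ideals `I`, `J` with `I * J = (ℓ)` and residue rings `ℤ/ℓ`.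
By the Chinese remainder theorem `O/ℓ^a ≅ O/I^a × O/J^a`, and each factor is `ℤ/ℓ^a`, since
`O = ℤ + I` and multiplication by `ℓ` raises the `I`-adic order by exactly one.  In `ℤ/n` two
elements are associated if and only if they have the same additive order, so a unit orbit in
`ℤ/ℓ^a × ℤ/ℓ^a` is given by a pair of orders `(ℓ^i, ℓ^j)`; it has `φ(ℓ^i) φ(ℓ^j)` elements, all of
additive order `ℓ^max(i, j)`.
-/

section ComaximalIdeals

variable {A : Type*} [CommRing A] {I J : Ideal A} {x y : A}

lemma pow_le_pow_succ_sup_span_pow (hcop : IsCoprime I J) (hmul : I * J = Ideal.span {x}) (k : ℕ) :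
    I ^ k ≤ I ^ (k + 1) ⊔ Ideal.span {x ^ k} := by
  have hsup : I ⊔ J ^ k = ⊤ := hcop.pow_right.sup_eq
  refine le_of_eq ?_
  calc I ^ k = I ^ k * (I ⊔ J ^ k) := by rw [hsup, Ideal.mul_top]
    _ = I ^ (k + 1) ⊔ Ideal.span {x ^ k} := by
      rw [Ideal.mul_sup, ← pow_succ, ← mul_pow, hmul, Ideal.span_singleton_pow]

lemma mul_mem_pow_succ_iff (hcop : IsCoprime I J) (hmul : I * J = Ideal.span {x})
    (hx : x ∈ nonZeroDivisors A) (k : ℕ) : x * y ∈ I ^ (k + 1) ↔ y ∈ I ^ k := by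
  have hxI : x ∈ I := (hmul.ge.trans Ideal.mul_le_left) (Ideal.mem_span_singleton_self x)
  refine ⟨fun hxy ↦ ?_, fun hy ↦ pow_succ' I k ▸ Ideal.mul_mem_mul hxI hy⟩
  obtain ⟨i, hi, j, hj, hij⟩ := (hcop.pow (m := k) (n := k + 1)).exists
  have hxyj : x * y * j ∈ Ideal.span {x ^ (k + 1)} := by
    rw [← Ideal.span_singleton_pow, ← hmul, mul_pow]
    exact Ideal.mul_mem_mul hxy hj
  obtain ⟨z, hz⟩ := Ideal.mem_span_singleton'.mp hxyj
  have hyj : y * j = z * x ^ k := by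
    rw [← mul_cancel_left_mem_nonZeroDivisors hx]
    linear_combination -hz
  have hy : y = y * i + z * x ^ k := by linear_combination hyj - y * hij
  rw [hy]
  exact add_mem (Ideal.mul_mem_left _ _ hi) (Ideal.mul_mem_left _ _ (Ideal.pow_mem_pow hxI k))

end ComaximalIdeals

section QuotientKerPow

variable {A : Type*} [CommRing A] {n : ℕ} {φ : A →+* ZMod n} {J : Ideal A}

lemma exists_sub_intCast_mem_ker_pow (hcop : IsCoprime (RingHom.ker φ) J)
    (hmul : RingHom.ker φ * J = Ideal.span {(n : A)}) (k : ℕ) (x : A) :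
    ∃ m : ℤ, x - m ∈ RingHom.ker φ ^ k := by
  induction k with
  | zero => simp
  | succ k ih =>
    obtain ⟨m, hm⟩ := ih
    obtain ⟨p, hp, q, hq, hpq⟩ :=
      Submodule.mem_sup.mp (pow_le_pow_succ_sup_span_pow hcop hmul k hm)
    obtain ⟨y, rfl⟩ := Ideal.mem_span_singleton'.mp hq
    obtain ⟨r, hr⟩ := ZMod.intCast_surjective (φ y)
    have hyr : y - r ∈ RingHom.ker φ := by simp [RingHom.mem_ker, hr]
    have hn : (n : A) ∈ RingHom.ker φ := by simp [RingHom.mem_ker]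
    refine ⟨m + n ^ k * r, ?_⟩
    have hsplit : x - ((m + n ^ k * r : ℤ) : A) = p + (n : A) ^ k * (y - r) := by
      push_cast
      linear_combination -hpq
    rw [hsplit]
    exact add_mem hp (pow_succ (RingHom.ker φ) k ▸ Ideal.mul_mem_mul (Ideal.pow_mem_pow hn k) hyr)

lemma natCast_mem_ker_pow_iff (hcop : IsCoprime (RingHom.ker φ) J)
    (hmul : RingHom.ker φ * J = Ideal.span {(n : A)}) (hn : (n : A) ∈ nonZeroDivisors A)
    (k m : ℕ) : (m : A) ∈ RingHom.ker φ ^ k ↔ n ^ k ∣ m := by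
  refine ⟨fun hm ↦ ?_, fun ⟨c, hc⟩ ↦ ?_⟩
  · induction k generalizing m with
    | zero => simp
    | succ k ih =>
      have hnm : n ∣ m := by
        simpa [RingHom.mem_ker, ZMod.natCast_eq_zero_iff] using
          Ideal.pow_le_self k.succ_ne_zero hm
      obtain ⟨c, rfl⟩ := hnm
      rw [Nat.cast_mul, mul_mem_pow_succ_iff hcop hmul hn] at hm
      exact pow_succ' n k ▸ mul_dvd_mul_left n (ih c hm)
  · have hnφ : (n : A) ∈ RingHom.ker φ := by simp [RingHom.mem_ker]
    rw [hc, Nat.cast_mul, Nat.cast_pow]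
    exact Ideal.mul_mem_right _ _ (Ideal.pow_mem_pow hnφ k)

lemma nonempty_quotient_ker_pow_ringEquiv (hcop : IsCoprime (RingHom.ker φ) J)
    (hmul : RingHom.ker φ * J = Ideal.span {(n : A)}) (hn : (n : A) ∈ nonZeroDivisors A) (k : ℕ) :
    Nonempty ((A ⧸ RingHom.ker φ ^ k) ≃+* ZMod (n ^ k)) := by
  have : CharP (A ⧸ RingHom.ker φ ^ k) (n ^ k) := ⟨fun m ↦ by
    rw [← natCast_mem_ker_pow_iff hcop hmul hn, ← Ideal.Quotient.eq_zero_iff_mem, map_natCast]⟩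
  let ι : ZMod (n ^ k) →+* A ⧸ RingHom.ker φ ^ k := ZMod.castHom dvd_rfl _
  have hsurj : Function.Surjective ι := fun z ↦ by
    obtain ⟨x, rfl⟩ := Ideal.Quotient.mk_surjective z
    obtain ⟨m, hm⟩ := exists_sub_intCast_mem_ker_pow hcop hmul k x
    exact ⟨m, by rw [map_intCast, Ideal.Quotient.mk_eq_mk_iff_sub_mem _ _ |>.mpr hm, map_intCast]⟩
  exact ⟨(RingEquiv.ofBijective ι ⟨ZMod.castHom_injective _, hsurj⟩).symm⟩

end QuotientKerPow

section Splitting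

variable {A : Type*} [CommRing A]

lemma isCoprime_ker_fst_comp_ker_snd_comp {B C : Type*} [Ring B] [Ring C]
    {g : A →+* B × C} (hg : Function.Surjective g) :
    IsCoprime (RingHom.ker ((RingHom.fst B C).comp g))
      (RingHom.ker ((RingHom.snd B C).comp g)) := by
  obtain ⟨x, hx⟩ := hg (0, 1)
  refine Ideal.isCoprime_iff_exists.mpr ⟨x, ?_, 1 - x, ?_, by ring⟩ <;>
    simp [RingHom.mem_ker, hx]

lemma ker_fst_comp_inf_ker_snd_comp {B C : Type*} [Semiring B] [Semiring C] (g : A →+* B × C) :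
    RingHom.ker ((RingHom.fst B C).comp g) ⊓ RingHom.ker ((RingHom.snd B C).comp g) =
      RingHom.ker g := by
  ext x
  simp [RingHom.mem_ker, Prod.ext_iff]

lemma SplitsIn.nonempty_quotient_pow_ringEquiv {n : ℕ} (hsplit : SplitsIn A n)
    (hn : (n : A) ∈ nonZeroDivisors A) (a : ℕ) :
    Nonempty ((A ⧸ Ideal.span {((n ^ a : ℕ) : A)}) ≃+* ZMod (n ^ a) × ZMod (n ^ a)) := by
  obtain ⟨s⟩ := hsplit
  let g : A →+* ZMod n × ZMod n := s.toRingHom.comp (Ideal.Quotient.mk _)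
  let I := RingHom.ker ((RingHom.fst _ _).comp g)
  let J := RingHom.ker ((RingHom.snd _ _).comp g)
  have hcop : IsCoprime I J :=
    isCoprime_ker_fst_comp_ker_snd_comp (s.surjective.comp Ideal.Quotient.mk_surjective)
  have hmul : I * J = Ideal.span {(n : A)} := by
    rw [Ideal.mul_eq_inf_of_isCoprime hcop, ker_fst_comp_inf_ker_snd_comp, RingHom.ker_equiv_comp,
      Ideal.mk_ker]
  have hpow : Ideal.span {((n ^ a : ℕ) : A)} = I ^ a * J ^ a := by
    rw [← mul_pow, hmul, Ideal.span_singleton_pow, Nat.cast_pow]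
  obtain ⟨eI⟩ := nonempty_quotient_ker_pow_ringEquiv hcop hmul hn a
  obtain ⟨eJ⟩ := nonempty_quotient_ker_pow_ringEquiv hcop.symm (mul_comm J I ▸ hmul) hn a
  exact ⟨(Ideal.quotEquivOfEq hpow).trans
    ((Ideal.quotientMulEquivQuotientProd _ _ hcop.pow).trans (eI.prodCongr eJ))⟩

end Splitting

section UnitOrbits

lemma mem_orbit_units_iff_associated {M : Type*} [CommMonoid M] {x y : M} :
    y ∈ MulAction.orbit Mˣ x ↔ Associated x y := by
  simp only [MulAction.mem_orbit_iff, Units.smul_def, smul_eq_mul, mul_comm, Associated]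

lemma addOrderOf_eq_of_associated {R : Type*} [Ring R] {x y : R} (h : Associated x y) :
    addOrderOf x = addOrderOf y := by
  obtain ⟨c, rfl⟩ := h
  exact (addOrderOf_injective (AddMonoidHom.mulRight (c : R)) c.isUnit.mul_left_injective x).symm

lemma associated_map_iff {F M N : Type*} [Monoid M] [Monoid N] [EquivLike F M N]
    [MulEquivClass F M N] (e : F) {x y : M} : Associated (e x) (e y) ↔ Associated x y :=
  ⟨fun h ↦ by simpa using h.map (MulEquivClass.toMulEquiv e).symm, fun h ↦ h.map e⟩

lemma addOrderOf_eq_lcm {F G H K : Type*} [AddMonoid G] [AddMonoid H] [AddMonoid K]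
    [EquivLike F G (H × K)] [AddEquivClass F G (H × K)] (e : F) (x : G) :
    addOrderOf x = (addOrderOf (e x).1).lcm (addOrderOf (e x).2) := by
  rw [← Prod.addOrderOf]
  exact ((AddEquivClass.toAddEquiv e).addOrderOf_eq x).symm

variable {m n : ℕ} [NeZero m] [NeZero n]

lemma addOrderOf_dvd_of_zmod (x : ZMod n) : addOrderOf x ∣ n := by
  simpa using addOrderOf_dvd_card (x := x)

lemma addOrderOf_natCast_div {d : ℕ} (hd : d ∣ n) : addOrderOf ((n / d : ℕ) : ZMod n) = d := by
  rw [ZMod.addOrderOf_coe _ (NeZero.ne n), Nat.gcd_eq_right (Nat.div_dvd_of_dvd hd),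
    Nat.div_div_self hd (NeZero.ne n)]

lemma associated_natCast_div_addOrderOf (x : ZMod n) :
    Associated x ((n / addOrderOf x : ℕ) : ZMod n) := by
  obtain ⟨d, hd, c, hc, rfl⟩ := x.eq_unit_mul_divisor
  have hassoc : Associated (c * (d : ZMod n)) d := (associated_isUnit_mul_left_iff hc).mpr .rfl
  rwa [addOrderOf_eq_of_associated hassoc, ZMod.addOrderOf_coe _ (NeZero.ne n),
    Nat.gcd_eq_right hd, Nat.div_div_self hd (NeZero.ne n)]

lemma associated_iff_addOrderOf_eq {x y : ZMod n} :
    Associated x y ↔ addOrderOf x = addOrderOf y := by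
  refine ⟨addOrderOf_eq_of_associated, fun h ↦ ?_⟩
  have hx := associated_natCast_div_addOrderOf x
  rw [h] at hx
  exact hx.trans (associated_natCast_div_addOrderOf y).symm

variable {R : Type*} [CommRing R] (e : R ≃+* ZMod m × ZMod n)

lemma mem_orbit_units_iff_addOrderOf_eq {x y : R} :
    y ∈ MulAction.orbit Rˣ x ↔
      addOrderOf (e y).1 = addOrderOf (e x).1 ∧ addOrderOf (e y).2 = addOrderOf (e x).2 := by
  rw [MulAction.mem_orbit_symm, mem_orbit_units_iff_associated, ← associated_map_iff e,
    Prod.associated_iff, associated_iff_addOrderOf_eq, associated_iff_addOrderOf_eq]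

lemma natCard_addOrderOf_eq {d : ℕ} (hd : d ∣ n) :
    Nat.card {x : ZMod n // addOrderOf x = d} = d.totient := by
  rw [Nat.card_eq_fintype_card, Fintype.card_subtype]
  exact IsAddCyclic.card_addOrderOf_eq_totient (by simpa using hd)

lemma natCard_orbit_units (x : R) :
    Nat.card (MulAction.orbit Rˣ x) =
      (addOrderOf (e x).1).totient * (addOrderOf (e x).2).totient := by
  rw [← natCard_addOrderOf_eq (addOrderOf_dvd_of_zmod (e x).1),
    ← natCard_addOrderOf_eq (addOrderOf_dvd_of_zmod (e x).2), ← Nat.card_prod]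
  exact Nat.card_congr
    ((e.toEquiv.subtypeEquiv fun _ ↦ mem_orbit_units_iff_addOrderOf_eq e).trans
      Equiv.subtypeProdEquivProd)

end UnitOrbits

/-- The representative of the unit orbit of `R ≃ ℤ/m × ℤ/n` whose elements have coordinates of
additive orders `c` and `d`, where `c ∣ m` and `d ∣ n`. -/
def orbitRep {R : Type*} [CommRing R] {m n : ℕ} (e : R ≃+* ZMod m × ZMod n) (c d : ℕ) : R :=
  e.symm ((m / c : ℕ), (n / d : ℕ))

namespace orbitRep

variable {R : Type*} [CommRing R] {m n : ℕ} (e : R ≃+* ZMod m × ZMod n)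
  {c d c' d' : ℕ}

lemma addOrderOf_fst [NeZero m] (hc : c ∣ m) : addOrderOf (e (orbitRep e c d)).1 = c := by
  simp only [orbitRep, RingEquiv.apply_symm_apply, addOrderOf_natCast_div hc]

lemma addOrderOf_snd [NeZero n] (hd : d ∣ n) : addOrderOf (e (orbitRep e c d)).2 = d := by
  simp only [orbitRep, RingEquiv.apply_symm_apply, addOrderOf_natCast_div hd]

variable [NeZero m] [NeZero n]

lemma addOrderOf_eq (hc : c ∣ m) (hd : d ∣ n) : addOrderOf (orbitRep e c d) = c.lcm d := by
  rw [addOrderOf_eq_lcm e, addOrderOf_fst e hc, addOrderOf_snd e hd]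

lemma natCard_orbit (hc : c ∣ m) (hd : d ∣ n) :
    Nat.card (MulAction.orbit Rˣ (orbitRep e c d)) = c.totient * d.totient := by
  rw [natCard_orbit_units e, addOrderOf_fst e hc, addOrderOf_snd e hd]

lemma mem_orbit_iff (hc : c ∣ m) (hd : d ∣ n) {x : R} :
    x ∈ MulAction.orbit Rˣ (orbitRep e c d) ↔ addOrderOf (e x).1 = c ∧ addOrderOf (e x).2 = d := by
  rw [mem_orbit_units_iff_addOrderOf_eq e, addOrderOf_fst e hc, addOrderOf_snd e hd]

lemma orbit_eq_iff (hc : c ∣ m) (hd : d ∣ n) (hc' : c' ∣ m) (hd' : d' ∣ n) :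
    MulAction.orbit Rˣ (orbitRep e c d) = MulAction.orbit Rˣ (orbitRep e c' d') ↔
      c = c' ∧ d = d' := by
  rw [MulAction.orbit_eq_iff, mem_orbit_iff e hc' hd', addOrderOf_fst e hc, addOrderOf_snd e hd]

end orbitRep

section PrimePowers

variable {ℓ : ℕ}

lemma lcm_eq_prime_pow (hℓ : ℓ.Prime) {a c d : ℕ} (h : c.lcm d = ℓ ^ a) :
    (c = ℓ ^ a ∧ ∃ i < a, d = ℓ ^ i) ∨ ((∃ i < a, c = ℓ ^ i) ∧ d = ℓ ^ a) ∨
      (c = ℓ ^ a ∧ d = ℓ ^ a) := by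
  obtain ⟨i, hi, rfl⟩ := (Nat.dvd_prime_pow hℓ).mp (h ▸ Nat.dvd_lcm_left c d)
  obtain ⟨j, hj, rfl⟩ := (Nat.dvd_prime_pow hℓ).mp (h ▸ Nat.dvd_lcm_right (ℓ ^ i) d)
  have hmax : i = a ∨ j = a := by
    rcases le_total i j with hij | hji
    · rw [Nat.lcm_eq_right (pow_dvd_pow ℓ hij)] at h
      exact .inr (Nat.pow_right_injective hℓ.two_le h)
    · rw [Nat.lcm_eq_left (pow_dvd_pow ℓ hji)] at h
      exact .inl (Nat.pow_right_injective hℓ.two_le h)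
  grind

lemma totient_prime_pow_mul_totient_prime_pow (hℓ : ℓ.Prime) {i j : ℕ} (hi : i ≠ 0) (hj : j ≠ 0) :
    (ℓ ^ i).totient * (ℓ ^ j).totient = ℓ ^ (i + j - 2) * (ℓ - 1) ^ 2 := by
  rw [Nat.totient_prime_pow hℓ (Nat.pos_of_ne_zero hi),
    Nat.totient_prime_pow hℓ (Nat.pos_of_ne_zero hj),
    show i + j - 2 = (i - 1) + (j - 1) by lia, pow_add]
  ring

lemma totient_prime_pow_mul_totient_prime_pow_eq_ite (hℓ : ℓ.Prime) {a : ℕ} (ha : a ≠ 0) (i : ℕ) :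
    (ℓ ^ a).totient * (ℓ ^ i).totient =
      if i = 0 then ℓ ^ (a - 1) * (ℓ - 1) else ℓ ^ (a + i - 2) * (ℓ - 1) ^ 2 := by
  split_ifs with hi
  · simp [hi, Nat.totient_prime_pow hℓ (Nat.pos_of_ne_zero ha)]
  · exact totient_prime_pow_mul_totient_prime_pow hℓ ha hi

end PrimePowers

theorem split_orbit_structure_general {A : Type*} [CommRing A] {ℓ : ℕ} (hℓ : ℓ.Prime)
    (hreg : (ℓ : A) ∈ nonZeroDivisors A) {a : ℕ} (ha : a ≠ 0) (hsplit : SplitsIn A ℓ) :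
    ∃ (u v : Fin a → A ⧸ Ideal.span {((ℓ ^ a : ℕ) : A)})
      (w : A ⧸ Ideal.span {((ℓ ^ a : ℕ) : A)}),
      (∀ i, addOrderOf (u i) = ℓ ^ a) ∧
      (∀ i, addOrderOf (v i) = ℓ ^ a) ∧
      addOrderOf w = ℓ ^ a ∧
      (∀ i, Nat.card ↥(MulAction.orbit (A ⧸ Ideal.span {((ℓ ^ a : ℕ) : A)})ˣ (u i)) =
        if (i : ℕ) = 0 then ℓ ^ (a - 1) * (ℓ - 1)
        else ℓ ^ (a + (i : ℕ) - 2) * (ℓ - 1) ^ 2) ∧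
      (∀ i, Nat.card ↥(MulAction.orbit (A ⧸ Ideal.span {((ℓ ^ a : ℕ) : A)})ˣ (v i)) =
        if (i : ℕ) = 0 then ℓ ^ (a - 1) * (ℓ - 1)
        else ℓ ^ (a + (i : ℕ) - 2) * (ℓ - 1) ^ 2) ∧
      Nat.card ↥(MulAction.orbit (A ⧸ Ideal.span {((ℓ ^ a : ℕ) : A)})ˣ w) =
        ℓ ^ (2 * a - 2) * (ℓ - 1) ^ 2 ∧
      (∀ i j, MulAction.orbit (A ⧸ Ideal.span {((ℓ ^ a : ℕ) : A)})ˣ (u i) =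
        MulAction.orbit (A ⧸ Ideal.span {((ℓ ^ a : ℕ) : A)})ˣ (u j) → i = j) ∧
      (∀ i j, MulAction.orbit (A ⧸ Ideal.span {((ℓ ^ a : ℕ) : A)})ˣ (v i) =
        MulAction.orbit (A ⧸ Ideal.span {((ℓ ^ a : ℕ) : A)})ˣ (v j) → i = j) ∧
      (∀ i j, MulAction.orbit (A ⧸ Ideal.span {((ℓ ^ a : ℕ) : A)})ˣ (u i) ≠
        MulAction.orbit (A ⧸ Ideal.span {((ℓ ^ a : ℕ) : A)})ˣ (v j)) ∧
      (∀ i, MulAction.orbit (A ⧸ Ideal.span {((ℓ ^ a : ℕ) : A)})ˣ (u i) ≠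
        MulAction.orbit (A ⧸ Ideal.span {((ℓ ^ a : ℕ) : A)})ˣ w) ∧
      (∀ i, MulAction.orbit (A ⧸ Ideal.span {((ℓ ^ a : ℕ) : A)})ˣ (v i) ≠
        MulAction.orbit (A ⧸ Ideal.span {((ℓ ^ a : ℕ) : A)})ˣ w) ∧
      (∀ x : A ⧸ Ideal.span {((ℓ ^ a : ℕ) : A)}, addOrderOf x = ℓ ^ a →
        (∃ i, x ∈ MulAction.orbit (A ⧸ Ideal.span {((ℓ ^ a : ℕ) : A)})ˣ (u i)) ∨
        (∃ i, x ∈ MulAction.orbit (A ⧸ Ideal.span {((ℓ ^ a : ℕ) : A)})ˣ (v i)) ∨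
        x ∈ MulAction.orbit (A ⧸ Ideal.span {((ℓ ^ a : ℕ) : A)})ˣ w) := by
  obtain ⟨e⟩ := hsplit.nonempty_quotient_pow_ringEquiv hreg a
  have : NeZero (ℓ ^ a) := ⟨pow_ne_zero a hℓ.ne_zero⟩
  have hdvd (i : Fin a) : ℓ ^ (i : ℕ) ∣ ℓ ^ a := pow_dvd_pow ℓ i.2.le
  have hinj : Function.Injective (ℓ ^ ·) := Nat.pow_right_injective hℓ.two_le
  have hne (i : Fin a) : ℓ ^ (i : ℕ) ≠ ℓ ^ a := hinj.ne i.2.ne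
  refine ⟨fun i ↦ orbitRep e (ℓ ^ a) (ℓ ^ (i : ℕ)), fun i ↦ orbitRep e (ℓ ^ (i : ℕ)) (ℓ ^ a),
    orbitRep e (ℓ ^ a) (ℓ ^ a), fun i ↦ ?_, fun i ↦ ?_, ?_, fun i ↦ ?_, fun i ↦ ?_, ?_,
    fun i j h ↦ ?_, fun i j h ↦ ?_, fun i j h ↦ ?_, fun i h ↦ ?_, fun i h ↦ ?_, fun x hx ↦ ?_⟩
  · rw [orbitRep.addOrderOf_eq e dvd_rfl (hdvd i), Nat.lcm_eq_left (hdvd i)]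
  · rw [orbitRep.addOrderOf_eq e (hdvd i) dvd_rfl, Nat.lcm_eq_right (hdvd i)]
  · rw [orbitRep.addOrderOf_eq e dvd_rfl dvd_rfl, Nat.lcm_self]
  · rw [orbitRep.natCard_orbit e dvd_rfl (hdvd i),
      totient_prime_pow_mul_totient_prime_pow_eq_ite hℓ ha]
  · rw [orbitRep.natCard_orbit e (hdvd i) dvd_rfl, mul_comm,
      totient_prime_pow_mul_totient_prime_pow_eq_ite hℓ ha]
  · rw [orbitRep.natCard_orbit e dvd_rfl dvd_rfl,
      totient_prime_pow_mul_totient_prime_pow hℓ ha ha, two_mul]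
  · exact Fin.ext (hinj ((orbitRep.orbit_eq_iff e dvd_rfl (hdvd i) dvd_rfl (hdvd j)).mp h).2)
  · exact Fin.ext (hinj ((orbitRep.orbit_eq_iff e (hdvd i) dvd_rfl (hdvd j) dvd_rfl).mp h).1)
  · exact hne i ((orbitRep.orbit_eq_iff e dvd_rfl (hdvd i) (hdvd j) dvd_rfl).mp h).2
  · exact hne i ((orbitRep.orbit_eq_iff e dvd_rfl (hdvd i) dvd_rfl dvd_rfl).mp h).2
  · exact hne i ((orbitRep.orbit_eq_iff e (hdvd i) dvd_rfl dvd_rfl dvd_rfl).mp h).1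
  · rw [addOrderOf_eq_lcm e] at hx
    rcases lcm_eq_prime_pow hℓ hx with ⟨hfst, i, hi, hsnd⟩ | ⟨⟨i, hi, hfst⟩, hsnd⟩ | ⟨hfst, hsnd⟩
    · exact .inl ⟨⟨i, hi⟩, (orbitRep.mem_orbit_iff e dvd_rfl (hdvd ⟨i, hi⟩)).mpr ⟨hfst, hsnd⟩⟩
    · exact .inr (.inl ⟨⟨i, hi⟩,
        (orbitRep.mem_orbit_iff e (hdvd ⟨i, hi⟩) dvd_rfl).mpr ⟨hfst, hsnd⟩⟩)
    · exact .inr (.inr ((orbitRep.mem_orbit_iff e dvd_rfl dvd_rfl).mpr ⟨hfst, hsnd⟩))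

/-- Let `O` be the order of conductor `f` and `ℓ^a > 2` a prime power with
`ℓ ∤ f` and `ℓ` split in `O`.  The elements of `O/ℓ^a O` of additive order `ℓ^a` form exactly
`2a+1` orbits under `(O/ℓ^a O)ˣ`: two of cardinality `ℓ^{a-1}(ℓ-1)`; for each `1 ≤ i ≤ a-1`
two of cardinality `ℓ^{a+i-2}(ℓ-1)²`; and one of cardinality `ℓ^{2a-2}(ℓ-1)²`.  (The orbits
of sizes `ℓ^{a-1}(ℓ-1)` and `ℓ^{a+i-2}(ℓ-1)²` are indexed below by `u i`, `v i` for
`i = 0` and `1 ≤ i ≤ a-1` respectively, the remaining orbit by `w`.) -/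
theorem split_orbit_structure (K : Type*) [Field K] [NumberField K]
    (hK : IsImagQuadratic K) (f : ℕ) (hf : 0 < f)
    (O : Subalgebra ℤ K) (hO : IsOrderOfConductor K f O)
    (ℓ : ℕ) (hℓ : ℓ.Prime) (a : ℕ) (ha : 2 < ℓ ^ a)
    (hnd : ¬ ℓ ∣ f) (hsplit : SplitsIn (↥O) ℓ) :
    ∃ (u v : Fin a → ↥O ⧸ Ideal.span {((ℓ ^ a : ℕ) : ↥O)})
      (w : ↥O ⧸ Ideal.span {((ℓ ^ a : ℕ) : ↥O)}),
      (∀ i, addOrderOf (u i) = ℓ ^ a) ∧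
      (∀ i, addOrderOf (v i) = ℓ ^ a) ∧
      addOrderOf w = ℓ ^ a ∧
      (∀ i, Nat.card ↥(MulAction.orbit (↥O ⧸ Ideal.span {((ℓ ^ a : ℕ) : ↥O)})ˣ (u i)) =
        if (i : ℕ) = 0 then ℓ ^ (a - 1) * (ℓ - 1)
        else ℓ ^ (a + (i : ℕ) - 2) * (ℓ - 1) ^ 2) ∧
      (∀ i, Nat.card ↥(MulAction.orbit (↥O ⧸ Ideal.span {((ℓ ^ a : ℕ) : ↥O)})ˣ (v i)) =
        if (i : ℕ) = 0 then ℓ ^ (a - 1) * (ℓ - 1)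
        else ℓ ^ (a + (i : ℕ) - 2) * (ℓ - 1) ^ 2) ∧
      Nat.card ↥(MulAction.orbit (↥O ⧸ Ideal.span {((ℓ ^ a : ℕ) : ↥O)})ˣ w) =
        ℓ ^ (2 * a - 2) * (ℓ - 1) ^ 2 ∧
      (∀ i j, MulAction.orbit (↥O ⧸ Ideal.span {((ℓ ^ a : ℕ) : ↥O)})ˣ (u i) =
        MulAction.orbit (↥O ⧸ Ideal.span {((ℓ ^ a : ℕ) : ↥O)})ˣ (u j) → i = j) ∧
      (∀ i j, MulAction.orbit (↥O ⧸ Ideal.span {((ℓ ^ a : ℕ) : ↥O)})ˣ (v i) =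
        MulAction.orbit (↥O ⧸ Ideal.span {((ℓ ^ a : ℕ) : ↥O)})ˣ (v j) → i = j) ∧
      (∀ i j, MulAction.orbit (↥O ⧸ Ideal.span {((ℓ ^ a : ℕ) : ↥O)})ˣ (u i) ≠
        MulAction.orbit (↥O ⧸ Ideal.span {((ℓ ^ a : ℕ) : ↥O)})ˣ (v j)) ∧
      (∀ i, MulAction.orbit (↥O ⧸ Ideal.span {((ℓ ^ a : ℕ) : ↥O)})ˣ (u i) ≠
        MulAction.orbit (↥O ⧸ Ideal.span {((ℓ ^ a : ℕ) : ↥O)})ˣ w) ∧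
      (∀ i, MulAction.orbit (↥O ⧸ Ideal.span {((ℓ ^ a : ℕ) : ↥O)})ˣ (v i) ≠
        MulAction.orbit (↥O ⧸ Ideal.span {((ℓ ^ a : ℕ) : ↥O)})ˣ w) ∧
      (∀ x : ↥O ⧸ Ideal.span {((ℓ ^ a : ℕ) : ↥O)}, addOrderOf x = ℓ ^ a →
        (∃ i, x ∈ MulAction.orbit (↥O ⧸ Ideal.span {((ℓ ^ a : ℕ) : ↥O)})ˣ (u i)) ∨
        (∃ i, x ∈ MulAction.orbit (↥O ⧸ Ideal.span {((ℓ ^ a : ℕ) : ↥O)})ˣ (v i)) ∨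
        x ∈ MulAction.orbit (↥O ⧸ Ideal.span {((ℓ ^ a : ℕ) : ↥O)})ˣ w) := by
  exact split_orbit_structure_general hℓ (mem_nonZeroDivisors_of_ne_zero (mod_cast hℓ.ne_zero))
    (by rintro rfl; simp at ha) hsplit
end

section
/- Let O be the order of conductor f in an imaginary quadratic field, and let ℓ^a > 2 be a prime power with ℓ not dividing f and ℓ ramified in O (i.e. ℓ is neither split nor inert in O). Then the set of elements of O/ℓ^a O of additive order ℓ^a decomposes into exactly two orbits under the multiplication action of (O/ℓ^a O)^×: one orbit of cardinality ℓ^{2a−2}(ℓ−1) and one orbit of cardinality ℓ^{2a−1}(ℓ−1). -/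
set_option synthInstance.maxHeartbeats 1000000
set_option maxHeartbeats 1000000

open NumberField

/-!
Since `ℓ ∤ f`, the inclusion `O ⊆ 𝓞 K` induces an isomorphism `O/ℓ^a ≅ 𝓞 K/ℓ^a`, so `O` may be
replaced by the Dedekind domain `𝓞 K`. There `(ℓ)` has norm `ℓ²`; being neither a prime nor a
product of two distinct primes of norm `ℓ`, it is the square of a prime `P` of norm `ℓ`. The ring
`𝓞 K/P^(2a)` is local with principal maximal ideal `m`, so its nonzero unit orbits are the layers
`m^i ∖ m^(i+1)`, of cardinality `ℓ^(2a-i-1)(ℓ-1)`. An element has additive order `ℓ^a` exactly when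
it lies outside `(ℓ) = m²`, which leaves the two layers `i = 0` and `i = 1`.
-/

open IsLocalRing MulAction

/-- The elements of additive order `n` in `R` form exactly two orbits under multiplication by `Rˣ`,
one of cardinality `c` and one of cardinality `d`. -/
def HasTwoUnitOrbits (R : Type*) [CommRing R] (n c d : ℕ) : Prop :=
  ∃ P Q : R, addOrderOf P = n ∧ addOrderOf Q = n ∧
    Nat.card (orbit Rˣ P) = c ∧ Nat.card (orbit Rˣ Q) = d ∧
    orbit Rˣ P ≠ orbit Rˣ Q ∧ {x : R | addOrderOf x = n} = orbit Rˣ P ∪ orbit Rˣ Q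

section UnitOrbits

variable {R S : Type*} [CommRing R] [CommRing S]

theorem mem_orbit_units_iff_associated_s17 {x y : R} : y ∈ orbit Rˣ x ↔ Associated x y := by
  simp only [mem_orbit_iff, Units.smul_def, smul_eq_mul, Associated, mul_comm]

theorem image_orbit_units (e : R ≃+* S) (x : R) : e '' orbit Rˣ x = orbit Sˣ (e x) := by
  ext y
  obtain ⟨y, rfl⟩ := e.surjective y
  rw [e.injective.mem_set_image, mem_orbit_units_iff_associated_s17, mem_orbit_units_iff_associated_s17]
  refine ⟨fun h ↦ h.map e, fun h ↦ ?_⟩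
  simpa only [e.symm_apply_apply] using h.map e.symm

theorem HasTwoUnitOrbits.of_ringEquiv {n c d : ℕ} (e : R ≃+* S) (h : HasTwoUnitOrbits R n c d) :
    HasTwoUnitOrbits S n c d := by
  obtain ⟨P, Q, hP, hQ, hcardP, hcardQ, hne, hunion⟩ := h
  have addOrderOf_map (x : R) : addOrderOf (e x) = addOrderOf x :=
    addOrderOf_injective e.toAddMonoidHom e.injective x
  refine ⟨e P, e Q, by rwa [addOrderOf_map], by rwa [addOrderOf_map], ?_, ?_, ?_, ?_⟩
  · rw [← image_orbit_units, Nat.card_image_of_injective e.injective, hcardP]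
  · rw [← image_orbit_units, Nat.card_image_of_injective e.injective, hcardQ]
  · rw [← image_orbit_units, ← image_orbit_units]
    exact e.injective.image_injective.ne hne
  · rw [← image_orbit_units, ← image_orbit_units, ← Set.image_union, ← hunion]
    ext y
    obtain ⟨y, rfl⟩ := e.surjective y
    rw [e.injective.mem_set_image, Set.mem_ofPred_eq, Set.mem_ofPred_eq, addOrderOf_map]

end UnitOrbits

section LocalRing

variable {R : Type*} [CommRing R]

theorem isLocalRing_of_isMaximal_of_pow_eq_bot (m : Ideal R) [hm : m.IsMaximal] {n : ℕ}
    (hn : m ^ n = ⊥) : IsLocalRing R :=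
  .of_unique_max_ideal ⟨m, hm, fun _ hJ ↦
    (hm.eq_of_le hJ.ne_top (hJ.isPrime.le_of_pow_le (hn.trans_le bot_le))).symm⟩

variable [IsLocalRing R] {g x : R} {i : ℕ}

theorem associated_generator_pow (hg : maximalIdeal R = Ideal.span {g})
    (hx : x ∈ maximalIdeal R ^ i) (hx' : x ∉ maximalIdeal R ^ (i + 1)) :
    Associated (g ^ i) x := by
  rw [hg, Ideal.span_singleton_pow, Ideal.mem_span_singleton] at hx hx'
  obtain ⟨c, rfl⟩ := hx
  have hc : IsUnit c := by
    rw [← notMem_maximalIdeal, hg, Ideal.mem_span_singleton]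
    exact fun hgc ↦ hx' (pow_succ g i ▸ mul_dvd_mul_left _ hgc)
  exact associated_mul_unit_right _ _ hc

theorem orbit_units_eq_pow_sdiff_pow_succ (hm : (maximalIdeal R).IsPrincipal)
    (hx : x ∈ maximalIdeal R ^ i) (hx' : x ∉ maximalIdeal R ^ (i + 1)) :
    orbit Rˣ x =
      ((maximalIdeal R ^ i : Ideal R) : Set R) \ (maximalIdeal R ^ (i + 1) : Ideal R) := by
  obtain ⟨g, hg⟩ := hm
  ext y
  rw [mem_orbit_units_iff_associated_s17]
  constructor
  · intro hxy
    exact ⟨(Ideal.mem_iff_of_associated hxy).1 hx, mt (Ideal.mem_iff_of_associated hxy).2 hx'⟩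
  · rintro ⟨hy, hy'⟩
    exact (associated_generator_pow hg hx hx').symm.trans (associated_generator_pow hg hy hy')

end LocalRing

section Quotient

variable {A B : Type*} [CommRing A] [CommRing B]

theorem span_natCast_pow_eq {P : Ideal A} {p e : ℕ} (hpP : Ideal.span {(p : A)} = P ^ e) (a : ℕ) :
    Ideal.span {((p ^ a : ℕ) : A)} = P ^ (e * a) := by
  rw [Nat.cast_pow, ← Ideal.span_singleton_pow, hpP, pow_mul]

theorem addOrderOf_mk_eq_prime_pow_iff {p a : ℕ} (hp : p.Prime) (ha : a ≠ 0)
    (hreg : IsLeftRegular (p : A)) (x : A) :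
    addOrderOf (Ideal.Quotient.mk (Ideal.span {((p ^ a : ℕ) : A)}) x) = p ^ a ↔
      x ∉ Ideal.span {(p : A)} := by
  obtain ⟨b, rfl⟩ := Nat.exists_eq_succ_of_ne_zero ha
  have : Fact p.Prime := ⟨hp⟩
  have nsmul_mk_eq_zero_iff (k : ℕ) :
      p ^ k • Ideal.Quotient.mk (Ideal.span {((p ^ (b + 1) : ℕ) : A)}) x = 0 ↔
        (p : A) ^ (b + 1) ∣ p ^ k * x := by
    rw [← map_nsmul, Ideal.Quotient.eq_zero_iff_dvd, nsmul_eq_mul, Nat.cast_pow, Nat.cast_pow]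
  have pow_dvd_iff : (p : A) ^ (b + 1) ∣ p ^ b * x ↔ (p : A) ∣ x := by
    rw [pow_succ, (hreg.pow b).dvd_cancel_left]
  rw [Ideal.mem_span_singleton, ← pow_dvd_iff, ← nsmul_mk_eq_zero_iff]
  constructor
  · intro hord hzero
    have := addOrderOf_dvd_of_nsmul_eq_zero hzero
    rw [hord, Nat.pow_dvd_pow_iff_le_right hp.one_lt] at this
    omega
  · exact fun hne ↦ addOrderOf_eq_prime_pow hne
      ((nsmul_mk_eq_zero_iff _).2 (dvd_mul_right _ _))

theorem nonempty_quotient_span_natCast_ringEquiv {n f : ℕ} (hnf : n.Coprime f) (ι : A →+* B)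
    (hι : Function.Injective ι) (hf : ∀ b : B, f * b ∈ ι.range) :
    Nonempty ((A ⧸ Ideal.span {(n : A)}) ≃+* B ⧸ Ideal.span {(n : B)}) := by
  obtain ⟨u, v, huv⟩ : IsCoprime (n : ℤ) f := Nat.isCoprime_iff_coprime.2 hnf
  have bezout (b : B) : b = n * (u * b) + v * (f * b) := by
    have huvB : (u * n + v * f : B) = 1 := by exact_mod_cast congrArg (Int.cast : ℤ → B) huv
    linear_combination -b * huvB
  let φ : A →+* B ⧸ Ideal.span {(n : B)} := (Ideal.Quotient.mk _).comp ι
  have hφ : Function.Surjective φ := by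
    intro b
    obtain ⟨b, rfl⟩ := Ideal.Quotient.mk_surjective b
    obtain ⟨a, ha⟩ := hf b
    refine ⟨v * a, (Ideal.Quotient.mk_eq_mk_iff_sub_mem _ _).2 (Ideal.mem_span_singleton.2 ?_)⟩
    refine ⟨-(u * b), ?_⟩
    rw [map_mul, map_intCast, ha]
    linear_combination -bezout b
  have hker : Ideal.span {(n : A)} = RingHom.ker φ := by
    ext x
    rw [RingHom.mem_ker, RingHom.comp_apply, Ideal.Quotient.eq_zero_iff_dvd,
      Ideal.mem_span_singleton]
    refine ⟨fun h ↦ by simpa using map_dvd ι h, ?_⟩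
    rintro ⟨b, hb⟩
    obtain ⟨a, ha⟩ := hf b
    refine ⟨u * x + v * a, hι ?_⟩
    simp only [map_mul, map_add, map_natCast, map_intCast, ha, hb]
    linear_combination (n : B) * bezout b
  exact ⟨(Ideal.quotEquivOfEq hker).trans (RingHom.quotientKerEquivOfSurjective hφ)⟩

theorem natCard_map_mk_mul_natCard_quotient {I J : Ideal A} (hIJ : I ≤ J) :
    Nat.card (J.map (Ideal.Quotient.mk I)) * Nat.card (A ⧸ J) = Nat.card (A ⧸ I) := by
  rw [← Nat.card_congr (DoubleQuot.quotQuotEquivQuotOfLE hIJ).toEquiv, mul_comm]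
  exact ((J.map (Ideal.Quotient.mk I)).toAddSubgroup
    |>.card_eq_card_quotient_mul_card_addSubgroup).symm

end Quotient

section DedekindDomain

variable {S : Type*} [CommRing S] [IsDedekindDomain S] {P : Ideal S}

theorem isPrincipal_map_mk {I J : Ideal S} (hIJ : I ≤ J) (hI : I ≠ ⊥) :
    (J.map (Ideal.Quotient.mk I)).IsPrincipal := by
  obtain ⟨x, rfl⟩ := IsDedekindDomain.exists_sup_span_eq hIJ hI
  refine ⟨Ideal.Quotient.mk I x, ?_⟩
  rw [Ideal.map_sup, Ideal.map_quotient_self, bot_sup_eq, Ideal.map_span, Set.image_singleton]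

theorem addOrderOf_mk_pow_eq_prime_pow_iff (hP : P ≠ ⊥) {p a e : ℕ} (hp : p.Prime) (ha : a ≠ 0)
    (hpP : Ideal.span {(p : S)} = P ^ e) (x : S) :
    addOrderOf (Ideal.Quotient.mk (P ^ (e * a)) x) = p ^ a ↔ x ∉ P ^ e := by
  have hpS : (p : S) ≠ 0 := by
    rw [← Ideal.span_singleton_eq_bot.ne, hpP]
    exact pow_ne_zero e hP
  rw [← span_natCast_pow_eq hpP, ← hpP]
  exact addOrderOf_mk_eq_prime_pow_iff hp ha (IsRegular.of_ne_zero hpS).left x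

variable [P.IsPrime]

theorem natCard_map_mk_pow [Finite (S ⧸ P)] (hP : P ≠ ⊥) {i n : ℕ} (hin : i ≤ n) :
    Nat.card ((P ^ i).map (Ideal.Quotient.mk (P ^ n))) = Nat.card (S ⧸ P) ^ (n - i) := by
  have natCard_quotient_pow (k : ℕ) : Nat.card (S ⧸ P ^ k) = Nat.card (S ⧸ P) ^ k :=
    cardQuot_pow_of_prime hP
  refine Nat.eq_of_mul_eq_mul_right (pow_pos Nat.card_pos i : 0 < Nat.card (S ⧸ P) ^ i) ?_
  rw [← pow_add, Nat.sub_add_cancel hin, ← natCard_quotient_pow i, ← natCard_quotient_pow n]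
  exact natCard_map_mk_mul_natCard_quotient (Ideal.pow_le_pow_right hin)

theorem orbit_units_mk_eq_map_pow_sdiff (hP : P ≠ ⊥) {i n : ℕ} (hin : i < n) {x : S}
    (hx : x ∈ P ^ i) (hx' : x ∉ P ^ (i + 1)) :
    orbit (S ⧸ P ^ n)ˣ (Ideal.Quotient.mk (P ^ n) x) =
      ((P ^ i).map (Ideal.Quotient.mk (P ^ n)) : Set (S ⧸ P ^ n)) \
        (P ^ (i + 1)).map (Ideal.Quotient.mk (P ^ n)) := by
  have : P.IsMaximal := Ideal.IsPrime.isMaximal ‹_› hP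
  have : (P.map (Ideal.Quotient.mk (P ^ n))).IsMaximal :=
    .map_of_surjective_of_ker_le Ideal.Quotient.mk_surjective
      (Ideal.mk_ker.trans_le (Ideal.pow_le_self (by omega)))
  have pow_eq_bot : P.map (Ideal.Quotient.mk (P ^ n)) ^ n = ⊥ := by
    rw [← Ideal.map_pow, Ideal.map_quotient_self]
  have := isLocalRing_of_isMaximal_of_pow_eq_bot _ pow_eq_bot
  have mk_mem_iff {k : ℕ} (hk : k ≤ n) :
      Ideal.Quotient.mk (P ^ n) x ∈ maximalIdeal (S ⧸ P ^ n) ^ k ↔ x ∈ P ^ k := by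
    rw [← eq_maximalIdeal ‹_›, ← Ideal.map_pow,
      Ideal.mem_quotient_iff_mem (Ideal.pow_le_pow_right hk)]
  have hprincipal : (maximalIdeal (S ⧸ P ^ n)).IsPrincipal := by
    rw [← eq_maximalIdeal ‹_›]
    exact isPrincipal_map_mk (Ideal.pow_le_self (by omega)) (pow_ne_zero n hP)
  rw [orbit_units_eq_pow_sdiff_pow_succ hprincipal ((mk_mem_iff hin.le).2 hx)
    (mt (mk_mem_iff hin).1 hx'), ← eq_maximalIdeal ‹_›, ← Ideal.map_pow, ← Ideal.map_pow]

theorem mk_mem_orbit_units_mk_iff (hP : P ≠ ⊥) {i n : ℕ} (hin : i < n) {x y : S}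
    (hx : x ∈ P ^ i) (hx' : x ∉ P ^ (i + 1)) :
    Ideal.Quotient.mk (P ^ n) y ∈ orbit (S ⧸ P ^ n)ˣ (Ideal.Quotient.mk (P ^ n) x) ↔
      y ∈ P ^ i ∧ y ∉ P ^ (i + 1) := by
  rw [orbit_units_mk_eq_map_pow_sdiff hP hin hx hx', Set.mem_sdiff, SetLike.mem_coe,
    SetLike.mem_coe, Ideal.mem_quotient_iff_mem (Ideal.pow_le_pow_right hin.le),
    Ideal.mem_quotient_iff_mem (Ideal.pow_le_pow_right hin)]

theorem natCard_orbit_units_mk [Finite (S ⧸ P)] (hP : P ≠ ⊥) {i n : ℕ} (hin : i < n) {x : S}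
    (hx : x ∈ P ^ i) (hx' : x ∉ P ^ (i + 1)) :
    Nat.card (orbit (S ⧸ P ^ n)ˣ (Ideal.Quotient.mk (P ^ n) x)) =
      Nat.card (S ⧸ P) ^ (n - (i + 1)) * (Nat.card (S ⧸ P) - 1) := by
  have : Finite (S ⧸ P ^ n) := Ideal.finite_quotient_pow (IsNoetherian.noetherian P) n
  rw [orbit_units_mk_eq_map_pow_sdiff hP hin hx hx', Nat.card_coe_set_eq,
    Set.ncard_sdiff (Ideal.map_mono (Ideal.pow_le_pow_right i.le_succ)),
    ← Nat.card_coe_set_eq, ← Nat.card_coe_set_eq]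
  refine (congrArg₂ _ (natCard_map_mk_pow hP hin.le) (natCard_map_mk_pow hP hin)).trans ?_
  rw [Nat.mul_sub_one, ← pow_succ]
  congr! 2
  omega

theorem hasTwoUnitOrbits_quotient (hP : P ≠ ⊥) {p a : ℕ} (hp : p.Prime) (ha : a ≠ 0)
    (hcard : Nat.card (S ⧸ P) = p) (hpP : Ideal.span {(p : S)} = P ^ 2) :
    HasTwoUnitOrbits (S ⧸ Ideal.span {((p ^ a : ℕ) : S)}) (p ^ a)
      (p ^ (2 * a - 2) * (p - 1)) (p ^ (2 * a - 1) * (p - 1)) := by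
  have : Finite (S ⧸ P) := Nat.finite_of_card_ne_zero (hcard.trans_ne hp.ne_zero)
  have addOrderOf_mk := addOrderOf_mk_pow_eq_prime_pow_iff hP hp ha hpP
  have hlt₀ : 0 < 2 * a := by omega
  have hlt₁ : 1 < 2 * a := by omega
  have hP_top : P ≠ ⊤ := Ideal.IsPrime.ne_top ‹_›
  have hsq : P ^ 2 ≤ P := Ideal.pow_le_self two_ne_zero
  have h1 : (1 : S) ∈ P ^ 0 := by simp
  have h1' : (1 : S) ∉ P ^ 1 := by rwa [pow_one, ← Ideal.ne_top_iff_one]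
  obtain ⟨π, hπ, hπ'⟩ := Ideal.exists_mem_pow_notMem_pow_succ P hP hP_top 1
  rw [span_natCast_pow_eq hpP]
  refine ⟨Ideal.Quotient.mk _ π, Ideal.Quotient.mk _ 1, (addOrderOf_mk π).2 hπ',
    (addOrderOf_mk 1).2 fun h ↦ h1' (by simpa using hsq h), ?_, ?_, fun horbit ↦ ?_, ?_⟩
  · rw [natCard_orbit_units_mk hP hlt₁ hπ hπ', hcard]
  · rw [natCard_orbit_units_mk hP hlt₀ h1 h1', hcard]
  · have hmem := mem_orbit_self (M := (S ⧸ P ^ (2 * a))ˣ) (Ideal.Quotient.mk (P ^ (2 * a)) π)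
    rw [horbit, mk_mem_orbit_units_mk_iff hP hlt₀ h1 h1'] at hmem
    exact hmem.2 hπ
  · ext x
    obtain ⟨x, rfl⟩ := Ideal.Quotient.mk_surjective x
    rw [Set.mem_ofPred_eq, addOrderOf_mk, Set.mem_union, mk_mem_orbit_units_mk_iff hP hlt₁ hπ hπ',
      mk_mem_orbit_units_mk_iff hP hlt₀ h1 h1']
    by_cases hx : x ∈ P
    · simp [hx]
    · simp [hx, mt (@hsq x) hx]

end DedekindDomain

section IdealNorm

variable {S : Type*} [CommRing S] [IsDedekindDomain S] [Module.Free ℤ S] {p : ℕ}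

theorem ne_bot_of_absNorm_eq_prime (hp : p.Prime) {I : Ideal S} (hI : Ideal.absNorm I = p) :
    I ≠ ⊥ := by
  rintro rfl
  exact hp.ne_zero (hI ▸ Ideal.absNorm_bot)

theorem nonempty_quotient_mul_ringEquiv_zmod_prod (hp : p.Prime) {P Q : Ideal S} (hPQ : P ≠ Q)
    (hP : Ideal.absNorm P = p) (hQ : Ideal.absNorm Q = p) :
    Nonempty ((S ⧸ P * Q) ≃+* ZMod p × ZMod p) := by
  have isMaximal {I : Ideal S} (hI : Ideal.absNorm I = p) : I.IsMaximal := by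
    have hprime : I.IsPrime := Ideal.isPrime_of_irreducible_absNorm (hI ▸ hp)
    exact hprime.isMaximal (ne_bot_of_absNorm_eq_prime hp hI)
  have nonempty_equiv_zmod {I : Ideal S} (hI : Ideal.absNorm I = p) :
      Nonempty ((S ⧸ I) ≃+* ZMod p) := by
    have : Finite (S ⧸ I) := (Ideal.absNorm_ne_zero_iff I).1 (hI.trans_ne hp.ne_zero)
    have := Fintype.ofFinite (S ⧸ I)
    have hcard : Fintype.card (S ⧸ I) = p := by rwa [← Nat.card_eq_fintype_card]
    exact ⟨(ZMod.ringEquivOfPrime _ hp hcard).symm⟩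
  have := isMaximal hP
  have := isMaximal hQ
  obtain ⟨eP⟩ := nonempty_equiv_zmod hP
  obtain ⟨eQ⟩ := nonempty_equiv_zmod hQ
  exact ⟨(Ideal.quotientMulEquivQuotientProd P Q (Ideal.isCoprime_of_isMaximal hPQ)).trans
    (eP.prodCongr eQ)⟩

theorem exists_isPrime_eq_sq_of_not_isField_of_not_split (hp : p.Prime) {I : Ideal S}
    (hI : Ideal.absNorm I = p ^ 2) (hfield : ¬ IsField (S ⧸ I))
    (hsplit : ¬ Nonempty ((S ⧸ I) ≃+* ZMod p × ZMod p)) :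
    ∃ P : Ideal S, P.IsPrime ∧ Ideal.absNorm P = p ∧ I = P ^ 2 := by
  have hI_top : I ≠ ⊤ := by
    rw [Ne, ← Ideal.absNorm_eq_one_iff, hI, Nat.pow_eq_one]
    simp [hp.ne_one]
  obtain ⟨P, hPmax, hIP⟩ := I.exists_le_maximal hI_top
  obtain ⟨J, rfl⟩ := Ideal.dvd_iff_le.2 hIP
  have hP_top : Ideal.absNorm P ≠ 1 := mt Ideal.absNorm_eq_one_iff.1 hPmax.ne_top
  have hJ_top : Ideal.absNorm J ≠ 1 := by
    rw [Ne, Ideal.absNorm_eq_one_iff]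
    rintro rfl
    rw [Ideal.mul_top] at hfield
    exact hfield (Ideal.Quotient.maximal_ideal_iff_isField_quotient P |>.1 hPmax)
  rw [map_mul] at hI
  obtain ⟨hP, hJ⟩ := (Nat.Prime.mul_eq_prime_sq_iff hp hP_top hJ_top).1 hI
  have hPJ : P = J := by
    by_contra hne
    exact hsplit (nonempty_quotient_mul_ringEquiv_zmod_prod hp hne hP hJ)
  exact ⟨P, hPmax.isPrime, hP, by rw [← hPJ, sq]⟩

end IdealNorm

section Conductor

variable {K : Type*} [Field K] [NumberField K] {f : ℕ} {O : Subalgebra ℤ K}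

theorem IsOrderOfConductor.le_integralClosure (hO : IsOrderOfConductor K f O) :
    O ≤ integralClosure ℤ K := by
  intro x hx
  obtain ⟨a, y, rfl⟩ := (hO x).1 hx
  exact add_mem (intCast_mem _ a) (mul_mem (natCast_mem _ f) y.2)

theorem IsOrderOfConductor.nonempty_quotient_ringEquiv (hO : IsOrderOfConductor K f O) {n : ℕ}
    (hnf : n.Coprime f) :
    Nonempty ((O ⧸ Ideal.span {(n : O)}) ≃+* 𝓞 K ⧸ Ideal.span {(n : 𝓞 K)}) := by
  let ι : O →+* 𝓞 K := (Subalgebra.inclusion hO.le_integralClosure).toRingHom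
  have hι : Function.Injective ι := Subalgebra.inclusion_injective _
  refine nonempty_quotient_span_natCast_ringEquiv hnf ι hι fun y ↦ ?_
  exact ⟨⟨f * y, (hO _).2 ⟨0, y, by simp⟩⟩, rfl⟩

end Conductor

theorem ramified_orbit_structure_general (K : Type*) [Field K] [NumberField K]
    (hK : Module.finrank ℚ K = 2) (f : ℕ)
    (O : Subalgebra ℤ K) (hO : IsOrderOfConductor K f O)
    (ℓ : ℕ) (hℓ : ℓ.Prime) (a : ℕ) (ha : a ≠ 0)
    (hnd : ¬ ℓ ∣ f) (hsplit : ¬ SplitsIn O ℓ) (hinert : ¬ InertIn O ℓ) :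
    HasTwoUnitOrbits (O ⧸ Ideal.span {((ℓ ^ a : ℕ) : O)}) (ℓ ^ a)
      (ℓ ^ (2 * a - 2) * (ℓ - 1)) (ℓ ^ (2 * a - 1) * (ℓ - 1)) := by
  have hcop : ℓ.Coprime f := (Nat.Prime.coprime_iff_not_dvd hℓ).2 hnd
  obtain ⟨e⟩ := hO.nonempty_quotient_ringEquiv hcop
  obtain ⟨ea⟩ := hO.nonempty_quotient_ringEquiv (hcop.pow_left a)
  have hnorm : Ideal.absNorm (Ideal.span {(ℓ : 𝓞 K)}) = ℓ ^ 2 := by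
    rw [Ideal.absNorm_span_natCast, RingOfIntegers.rank, hK]
  obtain ⟨P, hPprime, hPnorm, hPsq⟩ := exists_isPrime_eq_sq_of_not_isField_of_not_split hℓ hnorm
    (fun h ↦ hinert (e.toMulEquiv.isField h)) (fun ⟨e'⟩ ↦ hsplit ⟨e.trans e'⟩)
  have hPbot := ne_bot_of_absNorm_eq_prime hℓ hPnorm
  exact (hasTwoUnitOrbits_quotient hPbot hℓ ha hPnorm hPsq).of_ringEquiv ea.symm

/-- Let `O` be the order of conductor `f` and `ℓ^a > 2` a prime power with
`ℓ ∤ f` and `ℓ` ramified in `O` (neither split nor inert).  The elements of `O/ℓ^a O` of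
additive order `ℓ^a` form exactly two orbits under `(O/ℓ^a O)ˣ`: one of cardinality
`ℓ^{2a-2}(ℓ-1)` and one of cardinality `ℓ^{2a-1}(ℓ-1)`. -/
theorem ramified_orbit_structure (K : Type*) [Field K] [NumberField K]
    (hK : IsImagQuadratic K) (f : ℕ) (hf : 0 < f)
    (O : Subalgebra ℤ K) (hO : IsOrderOfConductor K f O)
    (ℓ : ℕ) (hℓ : ℓ.Prime) (a : ℕ) (ha : 2 < ℓ ^ a)
    (hnd : ¬ ℓ ∣ f) (hram : ¬ SplitsIn (↥O) ℓ ∧ ¬ InertIn (↥O) ℓ) :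
    ∃ P Q : ↥O ⧸ Ideal.span {((ℓ ^ a : ℕ) : ↥O)},
      addOrderOf P = ℓ ^ a ∧ addOrderOf Q = ℓ ^ a ∧
      Nat.card ↥(MulAction.orbit (↥O ⧸ Ideal.span {((ℓ ^ a : ℕ) : ↥O)})ˣ P) =
        ℓ ^ (2 * a - 2) * (ℓ - 1) ∧
      Nat.card ↥(MulAction.orbit (↥O ⧸ Ideal.span {((ℓ ^ a : ℕ) : ↥O)})ˣ Q) =
        ℓ ^ (2 * a - 1) * (ℓ - 1) ∧
      MulAction.orbit (↥O ⧸ Ideal.span {((ℓ ^ a : ℕ) : ↥O)})ˣ P ≠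
        MulAction.orbit (↥O ⧸ Ideal.span {((ℓ ^ a : ℕ) : ↥O)})ˣ Q ∧
      {x : ↥O ⧸ Ideal.span {((ℓ ^ a : ℕ) : ↥O)} | addOrderOf x = ℓ ^ a} =
        MulAction.orbit (↥O ⧸ Ideal.span {((ℓ ^ a : ℕ) : ↥O)})ˣ P ∪
          MulAction.orbit (↥O ⧸ Ideal.span {((ℓ ^ a : ℕ) : ↥O)})ˣ Q := by
  have ha0 : a ≠ 0 := by
    rintro rfl
    simp at ha
  exact ramified_orbit_structure_general K hK.1 f O hO ℓ hℓ a ha0 hnd hram.1 hram.2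
end

section
/- Let O be the order of conductor f in an imaginary quadratic field and let ℓ be a prime dividing f. Then there is a ring isomorphism O/ℓO ≅ (ℤ/ℓℤ)[ε]/(ε²), the ring of dual numbers over ℤ/ℓℤ; in particular O/ℓO is a local ring whose maximal ideal has square zero. Moreover, for every positive integer a and every element P ∈ O/ℓ^a O of additive order ℓ^a with annihilator ideal I_P = {x ∈ O : xP = 0}, one has #((O/I_P)^×) = ℓ^c(ℓ−1) for some integer c with a−1 ≤ c ≤ 2a−1; hence every orbit of (O/ℓ^a O)^× on an element of additive order ℓ^a has cardinality ℓ^c(ℓ−1) with a−1 ≤ c ≤ 2a−1. -/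
set_option synthInstance.maxHeartbeats 1000000
set_option maxHeartbeats 1000000

open NumberField

/-- The annihilator ideal `{x : R | x • P = 0}` of an element `P` of an `R`-module. -/
def annIdeal {R M : Type*} [CommRing R] [AddCommGroup M] [Module R M] (P : M) :
    Ideal R where
  carrier := {x | x • P = 0}
  add_mem' := by
    intro a b ha hb
    simp only [Set.mem_setOf_eq] at *
    rw [add_smul, ha, hb, add_zero]
  zero_mem' := zero_smul R P
  smul_mem' := by
    intro c x hx
    simp only [Set.mem_setOf_eq, smul_eq_mul] at *
    rw [mul_smul, hx, smul_zero]

/-!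
The ideal `C = f𝓞_K` of `O = ℤ + f𝓞_K` satisfies `O = ℤ + C` and `C² = f · f𝓞_K ⊆ ℓO`. Its image in
`O/ℓO` is therefore an ideal of square zero with quotient `𝔽_ℓ`, so `O/ℓO` is a local ring and a
trivial square-zero extension of `𝔽_ℓ` by a space of dimension `[K : ℚ] - 1`.

Since `ℓ` is nilpotent in `B = O/ℓ^a O`, this ring is local with residue field `𝔽_ℓ` as well. Units
lift along surjections from a local ring, so the orbit of `P` has as many elements as `(O/I_P)ˣ`
by orbit-stabilizer. Finally `O/I_P` is a finite local ring with residue field `𝔽_ℓ`: if it has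
`ℓ^(c+1)` elements, then it has `ℓ^c (ℓ - 1)` units. Here `ℓ^(c+1)` divides `#B = ℓ^([K : ℚ] a)`,
and it is divisible by the order `ℓ^a` of `P`, because `O/I_P` is isomorphic to the submodule `O P`.
-/

section LocalRing

variable {R S : Type*} [CommRing R] [CommRing S]

theorem isLocalHom_of_ker_le_nilradical {f : R →+* S} (hf : Function.Surjective f)
    (hker : RingHom.ker f ≤ nilradical R) : IsLocalHom f where
  map_nonunit x hx := by
    obtain ⟨y, hy⟩ := hf ↑hx.unit⁻¹
    have hmem : x * y - 1 ∈ RingHom.ker f := by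
      rw [RingHom.mem_ker, map_sub, map_mul, hy, hx.mul_val_inv, map_one, sub_self]
    have hunit : IsUnit (x * y) := by
      simpa using (mem_nilradical.mp (hker hmem)).isUnit_add_one
    exact isUnit_of_mul_isUnit_left hunit

open IsLocalRing

theorem natCard_residueField_eq_of_surjective [IsLocalRing R] [IsLocalRing S] {f : R →+* S}
    (hf : Function.Surjective f) : Nat.card (ResidueField R) = Nat.card (ResidueField S) := by
  have := hf.isLocalHom
  refine Nat.card_congr (Equiv.ofBijective (ResidueField.map f) ⟨RingHom.injective _, ?_⟩)
  refine Function.Surjective.of_comp (g := residue R) ?_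
  rw [← RingHom.coe_comp, ResidueField.map_comp_residue]
  exact residue_surjective.comp hf

theorem natCard_units_add_natCard_maximalIdeal (R : Type*) [CommRing R] [IsLocalRing R]
    [Finite R] : Nat.card Rˣ + Nat.card (maximalIdeal R) = Nat.card R := by
  have hunits : Nat.card Rˣ = {x : R | IsUnit x}.ncard :=
    Nat.card_congr (Submonoid.unitsTypeEquivIsUnitSubmonoid (M := R)).toEquiv
  rw [hunits]
  exact Set.ncard_add_ncard_compl {x : R | IsUnit x}

theorem natCard_units_eq_of_natCard_residueField [IsLocalRing R] {p s : ℕ} (hp : 0 < p)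
    (hres : Nat.card (ResidueField R) = p) (hcard : Nat.card R = p ^ (s + 1)) :
    Nat.card Rˣ = p ^ s * (p - 1) := by
  have : Finite R := Nat.finite_of_card_ne_zero (hcard ▸ (pow_pos hp _).ne')
  have hmax : Nat.card (maximalIdeal R) = p ^ s := by
    have := Submodule.card_eq_card_quotient_mul_card (maximalIdeal R)
    rw [hcard, show Nat.card (R ⧸ maximalIdeal R) = p from hres, pow_succ] at this
    exact (Nat.eq_of_mul_eq_mul_right hp this).symm
  have := natCard_units_add_natCard_maximalIdeal R
  rw [hmax, hcard, pow_succ] at this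
  rw [Nat.mul_sub_one]
  omega

end LocalRing

section SquareZero

variable {k A : Type*} [CommRing k] [CommRing A] [Algebra k A] {J : Ideal A}

theorem nonempty_algEquiv_trivSqZeroExt {M : Type*} [AddCommGroup M] [Module k M]
    [Module kᵐᵒᵖ M] [IsCentralScalar k M] (hJ : J ^ 2 = ⊥)
    (hk : Function.Bijective (algebraMap k (A ⧸ J))) (e : M ≃ₗ[k] J) :
    Nonempty (A ≃ₐ[k] TrivSqZeroExt k M) := by
  let g : M →ₗ[k] A := J.subtype.restrictScalars k ∘ₗ e.toLinearMap
  have hg_mem (m : M) : g m ∈ J := (e m).2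
  have hg_mul (m m' : M) : g m * g m' = 0 := by
    have := Ideal.mul_mem_mul (hg_mem m) (hg_mem m')
    rwa [← pow_two, hJ, Ideal.mem_bot] at this
  let F : TrivSqZeroExt k M →ₐ[k] A := TrivSqZeroExt.liftEquivOfComm ⟨g, hg_mul⟩
  have hF (x : TrivSqZeroExt k M) : F x = algebraMap k A x.fst + g x.snd := rfl
  have hF_mk (x : TrivSqZeroExt k M) :
      Ideal.Quotient.mk J (F x) = algebraMap k (A ⧸ J) x.fst := by
    rw [hF, map_add, Ideal.Quotient.eq_zero_iff_mem.mpr (hg_mem _), add_zero]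
    rfl
  have hF_inj : Function.Injective F := by
    rw [injective_iff_map_eq_zero]
    intro x hx
    have hfst : x.fst = 0 := by
      apply hk.injective
      rw [← hF_mk, hx, map_zero, map_zero]
    have hsnd : g x.snd = 0 := by rwa [hF, hfst, map_zero, zero_add] at hx
    exact TrivSqZeroExt.ext hfst (e.map_eq_zero_iff.mp (Subtype.ext hsnd))
  have hF_surj : Function.Surjective F := by
    intro x
    obtain ⟨c, hc⟩ := hk.surjective (Ideal.Quotient.mk J x)
    have hx : x - algebraMap k A c ∈ J := Ideal.Quotient.eq.mp hc.symm
    refine ⟨TrivSqZeroExt.inl c + TrivSqZeroExt.inr (e.symm ⟨_, hx⟩), ?_⟩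
    simp [hF, g]
  exact ⟨(AlgEquiv.ofBijective F ⟨hF_inj, hF_surj⟩).symm⟩

end SquareZero

section SquareZeroField

variable {k A : Type*} [Field k] [CommRing A] [Algebra k A] {J : Ideal A}

theorem finrank_ideal_add_one_eq_finrank [Module.Finite k A]
    (hk : Function.Bijective (algebraMap k (A ⧸ J))) :
    Module.finrank k J + 1 = Module.finrank k A := by
  have hquot : Module.finrank k (A ⧸ J) = 1 :=
    (LinearEquiv.ofBijective (Algebra.linearMap k (A ⧸ J)) hk).finrank_eq.symm.trans
      (Module.finrank_self k)
  have := (J.restrictScalars k).finrank_quotient_add_finrank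
  rw [(Submodule.Quotient.restrictScalarsEquiv k J).finrank_eq, hquot, add_comm] at this
  exact this

theorem nonempty_algEquiv_trivSqZeroExt_of_finrank [Module.Finite k A] {M : Type*}
    [AddCommGroup M] [Module k M] [Module kᵐᵒᵖ M] [IsCentralScalar k M] [Module.Finite k M]
    (hJ : J ^ 2 = ⊥) (hk : Function.Bijective (algebraMap k (A ⧸ J)))
    (hM : Module.finrank k M + 1 = Module.finrank k A) :
    Nonempty (A ≃ₐ[k] TrivSqZeroExt k M) := by
  have : Module.Finite k J := Module.Finite.of_injective (J.subtype.restrictScalars k)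
    Subtype.val_injective
  have hrank : Module.finrank k M = Module.finrank k J :=
    Nat.add_right_cancel (hM.trans (finrank_ideal_add_one_eq_finrank hk).symm)
  exact nonempty_algEquiv_trivSqZeroExt hJ hk (LinearEquiv.ofFinrankEq M J hrank)

theorem bijective_algebraMap_quotient_of_sq_eq_bot [Nontrivial A] (hJ : J ^ 2 = ⊥)
    (hk : Function.Surjective (algebraMap k (A ⧸ J))) :
    Function.Bijective (algebraMap k (A ⧸ J)) := by
  have hJ_ne_top : J ≠ ⊤ := by
    rintro rfl
    exact top_ne_bot ((Ideal.top_pow A 2).symm.trans hJ)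
  have := Ideal.Quotient.nontrivial_iff.mpr hJ_ne_top
  exact ⟨(algebraMap k (A ⧸ J)).injective, hk⟩

open IsLocalRing

theorem isLocalRing_of_sq_eq_bot (hJ : J ^ 2 = ⊥)
    (hk : Function.Bijective (algebraMap k (A ⧸ J))) : IsLocalRing A := by
  have : IsLocalRing (A ⧸ J) := (RingEquiv.ofBijective _ hk).isLocalRing
  have hker : RingHom.ker (Ideal.Quotient.mk J) ≤ nilradical A := by
    rw [Ideal.mk_ker]
    exact fun x hx ↦ ⟨2, (Submodule.mem_bot A).mp (hJ ▸ Ideal.pow_mem_pow hx 2)⟩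
  have := isLocalHom_of_ker_le_nilradical Ideal.Quotient.mk_surjective hker
  exact (Ideal.Quotient.mk J).domain_isLocalRing

theorem maximalIdeal_eq_of_bijective_algebraMap [IsLocalRing A]
    (hk : Function.Bijective (algebraMap k (A ⧸ J))) : maximalIdeal A = J := by
  have hfield : IsField (A ⧸ J) :=
    (RingEquiv.ofBijective _ hk).symm.toMulEquiv.isField (Field.toIsField k)
  exact (eq_maximalIdeal (Ideal.Quotient.maximal_of_isField J hfield)).symm

theorem natCard_residueField_eq_of_bijective_algebraMap [IsLocalRing A]
    (hk : Function.Bijective (algebraMap k (A ⧸ J))) :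
    Nat.card (ResidueField A) = Nat.card k := by
  obtain rfl := maximalIdeal_eq_of_bijective_algebraMap hk
  exact (Nat.card_congr (Equiv.ofBijective _ hk)).symm

end SquareZeroField

section Orbit

open IsLocalRing Ideal

variable {B M : Type*} [CommRing B] [AddCommGroup M] [Module B M]

theorem stabilizer_units_eq_ker_map_mk (P : M) :
    MulAction.stabilizer Bˣ P =
      (Units.map (Ideal.Quotient.mk (torsionOf B M P)).toMonoidHom).ker := by
  ext u
  rw [MulAction.mem_stabilizer_iff, MonoidHom.mem_ker, Units.ext_iff]
  change (u : B) • P = P ↔ Ideal.Quotient.mk (torsionOf B M P) u = Ideal.Quotient.mk _ 1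
  rw [Ideal.Quotient.eq, mem_torsionOf_iff, sub_smul, one_smul, sub_eq_zero]

theorem natCard_orbit_units_eq_natCard_units [IsLocalRing B] {P : M} (hP : P ≠ 0) :
    Nat.card (MulAction.orbit Bˣ P) = Nat.card (B ⧸ torsionOf B M P)ˣ := by
  have : Nontrivial (B ⧸ torsionOf B M P) :=
    Ideal.Quotient.nontrivial_iff.mpr (mt (torsionOf_eq_top_iff B P).mp hP)
  have hsurj : Function.Surjective
      (Units.map (Ideal.Quotient.mk (torsionOf B M P)).toMonoidHom) :=
    surjective_units_map_of_local_ringHom _ Ideal.Quotient.mk_surjective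
      Ideal.Quotient.mk_surjective.isLocalHom
  rw [Nat.card_congr (MulAction.orbitEquivQuotientStabilizer Bˣ P),
    stabilizer_units_eq_ker_map_mk]
  exact Nat.card_congr (QuotientGroup.quotientKerEquivOfSurjective _ hsurj).toEquiv

theorem addOrderOf_dvd_natCard_quotient_torsionOf (P : M) :
    addOrderOf P ∣ Nat.card (B ⧸ torsionOf B M P) := by
  rw [Nat.card_congr (quotTorsionOfEquivSpanSingleton B M P).toEquiv]
  exact AddSubgroup.addOrderOf_dvd_natCard (Submodule.span B {P}).toAddSubgroup
    (Submodule.mem_span_singleton_self P)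

theorem exists_natCard_units_eq_and_natCard_orbit_eq [IsLocalRing B] {p n a : ℕ}
    (hp : p.Prime) (hres : Nat.card (ResidueField B) = p) (hcard : Nat.card B = p ^ n)
    (ha : 0 < a) {P : M} (hP : addOrderOf P = p ^ a) :
    ∃ c : ℕ, a - 1 ≤ c ∧ c ≤ n - 1 ∧
      Nat.card (B ⧸ torsionOf B M P)ˣ = p ^ c * (p - 1) ∧
      Nat.card (MulAction.orbit Bˣ P) = p ^ c * (p - 1) := by
  have hP0 : P ≠ 0 := by
    rintro rfl
    rw [addOrderOf_zero] at hP
    exact (Nat.one_lt_pow ha.ne' hp.one_lt).ne hP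
  have : Nontrivial (B ⧸ torsionOf B M P) :=
    Ideal.Quotient.nontrivial_iff.mpr (mt (torsionOf_eq_top_iff B P).mp hP0)
  have : IsLocalRing (B ⧸ torsionOf B M P) := .of_surjective' _ Ideal.Quotient.mk_surjective
  obtain ⟨s, hsn, hs⟩ : ∃ s ≤ n, Nat.card (B ⧸ torsionOf B M P) = p ^ s := by
    rw [← Nat.dvd_prime_pow hp, ← hcard]
    exact AddSubgroup.card_quotient_dvd_card _
  have has : a ≤ s := by
    rw [← Nat.pow_dvd_pow_iff_le_right hp.one_lt, ← hP, ← hs]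
    exact addOrderOf_dvd_natCard_quotient_torsionOf P
  obtain ⟨c, rfl⟩ : ∃ c, s = c + 1 := ⟨s - 1, by omega⟩
  have hunits : Nat.card (B ⧸ torsionOf B M P)ˣ = p ^ c * (p - 1) :=
    natCard_units_eq_of_natCard_residueField hp.pos
      ((natCard_residueField_eq_of_surjective Ideal.Quotient.mk_surjective).symm.trans hres) hs
  exact ⟨c, by omega, by omega, hunits,
    (natCard_orbit_units_eq_natCard_units hP0).trans hunits⟩

theorem nonempty_quotient_annIdeal_ringEquiv {R : Type*} [CommRing R] [Algebra R B] [Module R M]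
    [IsScalarTower R B M] (hRB : Function.Surjective (algebraMap R B)) (P : M) :
    Nonempty ((R ⧸ annIdeal (R := R) P) ≃+* B ⧸ torsionOf B M P) := by
  let F : R →+* B ⧸ torsionOf B M P := (Ideal.Quotient.mk _).comp (algebraMap R B)
  have hF : Function.Surjective F := Ideal.Quotient.mk_surjective.comp hRB
  have hker : annIdeal (R := R) P = RingHom.ker F := by
    ext x
    rw [RingHom.mem_ker, RingHom.comp_apply, Ideal.Quotient.eq_zero_iff_mem, mem_torsionOf_iff,
      algebraMap_smul]
    rfl
  exact ⟨(Ideal.quotEquivOfEq hker).trans (RingHom.quotientKerEquivOfSurjective hF)⟩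

end Orbit

section PrimePower

variable (R : Type*) [CommRing R] (p : ℕ) {a : ℕ}

theorem span_natCast_pow_le (ha : a ≠ 0) :
    Ideal.span {((p ^ a : ℕ) : R)} ≤ Ideal.span {(p : R)} := by
  rw [Ideal.span_singleton_le_span_singleton, Nat.cast_pow]
  exact dvd_pow_self _ ha

theorem isLocalHom_factor_span_natCast_pow (ha : a ≠ 0) :
    IsLocalHom (Ideal.Quotient.factor (span_natCast_pow_le R p ha)) := by
  refine isLocalHom_of_ker_le_nilradical (Ideal.Quotient.factor_surjective _) ?_
  rw [Ideal.Quotient.factor_ker, Ideal.map_span, Set.image_singleton,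
    Ideal.span_singleton_le_iff_mem]
  refine ⟨a, ?_⟩
  rw [← map_pow, ← Nat.cast_pow]
  exact Ideal.Quotient.eq_zero_iff_mem.mpr (Ideal.mem_span_singleton_self _)

end PrimePower

section FreeOverInt

variable (R : Type*) [CommRing R] [Module.Free ℤ R] [Module.Finite ℤ R]

theorem natCard_quotient_span_natCast (n : ℕ) [NeZero n] :
    Nat.card (R ⧸ Ideal.span {(n : R)}) = n ^ Module.finrank ℤ R := by
  have hrange : (Ideal.span {(n : R)}).toAddSubgroup =
      (LinearMap.range (LinearMap.lsmul ℤ R n)).toAddSubgroup := by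
    ext x
    simp [Ideal.mem_span_singleton, Dvd.dvd, eq_comm]
  rw [← ModN.natCard_eq R n]
  exact Nat.card_congr (QuotientAddGroup.quotientAddEquivOfEq hrange).toEquiv

theorem finite_quotient_span_natCast (n : ℕ) [NeZero n] : Finite (R ⧸ Ideal.span {(n : R)}) :=
  Nat.finite_of_card_ne_zero (natCard_quotient_span_natCast R n ▸ pow_ne_zero _ (NeZero.ne n))

theorem nontrivial_quotient_span_natCast [Nontrivial R] {n : ℕ} (hn : 1 < n) :
    Nontrivial (R ⧸ Ideal.span {(n : R)}) := by
  have : NeZero n := ⟨(zero_lt_one.trans hn).ne'⟩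
  have := finite_quotient_span_natCast R n
  rw [← Finite.one_lt_card_iff_nontrivial, natCard_quotient_span_natCast]
  exact Nat.one_lt_pow Module.finrank_pos.ne' hn

theorem charP_quotient_span_natCast [Nontrivial R] (p : ℕ) [Fact p.Prime] :
    CharP (R ⧸ Ideal.span {(p : R)}) p := by
  have := nontrivial_quotient_span_natCast R (Fact.out : p.Prime).one_lt
  refine CharP.quotient R p fun hunit ↦ ?_
  exact Ideal.Quotient.nontrivial_iff.mp this (Ideal.span_singleton_eq_top.mpr hunit)

theorem finrank_quotient_span_natCast (p : ℕ) [Fact p.Prime]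
    [Module (ZMod p) (R ⧸ Ideal.span {(p : R)})] :
    Module.finrank (ZMod p) (R ⧸ Ideal.span {(p : R)}) = Module.finrank ℤ R := by
  have := finite_quotient_span_natCast R p
  have hcard := natCard_quotient_span_natCast R p
  rw [Module.natCard_eq_pow_finrank (K := ZMod p), Nat.card_zmod] at hcard
  exact Nat.pow_right_injective (Fact.out : p.Prime).one_lt hcard

variable {R}

open IsLocalRing

theorem exists_natCard_units_quotient_annIdeal_eq {p : ℕ} (hp : p.Prime)
    [IsLocalRing (R ⧸ Ideal.span {(p : R)})]
    (hres : Nat.card (ResidueField (R ⧸ Ideal.span {(p : R)})) = p) {a : ℕ} (ha : 0 < a)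
    {P : R ⧸ Ideal.span {((p ^ a : ℕ) : R)}} (hP : addOrderOf P = p ^ a) :
    ∃ c : ℕ, a - 1 ≤ c ∧ c ≤ Module.finrank ℤ R * a - 1 ∧
      Nat.card (R ⧸ annIdeal (R := R) P)ˣ = p ^ c * (p - 1) ∧
      Nat.card (MulAction.orbit (R ⧸ Ideal.span {((p ^ a : ℕ) : R)})ˣ P) = p ^ c * (p - 1) := by
  have : NeZero (p ^ a) := ⟨pow_ne_zero a hp.ne_zero⟩
  have := isLocalHom_factor_span_natCast_pow R p ha.ne'
  have := (Ideal.Quotient.factor (span_natCast_pow_le R p ha.ne')).domain_isLocalRing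
  have hcard : Nat.card (R ⧸ Ideal.span {((p ^ a : ℕ) : R)}) = p ^ (Module.finrank ℤ R * a) := by
    rw [natCard_quotient_span_natCast, ← pow_mul, mul_comm]
  have hres' : Nat.card (ResidueField (R ⧸ Ideal.span {((p ^ a : ℕ) : R)})) = p :=
    (natCard_residueField_eq_of_surjective
      (Ideal.Quotient.factor_surjective (span_natCast_pow_le R p ha.ne'))).trans hres
  obtain ⟨e⟩ := nonempty_quotient_annIdeal_ringEquiv
    (R := R) (B := R ⧸ Ideal.span {((p ^ a : ℕ) : R)}) Ideal.Quotient.mk_surjective P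
  rw [Nat.card_congr (Units.mapEquiv e.toMulEquiv).toEquiv]
  exact exists_natCard_units_eq_and_natCard_orbit_eq hp hres' hcard ha hP

end FreeOverInt

theorem surjective_algebraMap_zmod_quotient_map {R A : Type*} [CommRing R] [CommRing A] {n : ℕ}
    [Algebra (ZMod n) A] {q : R →+* A} (hq : Function.Surjective q) {I : Ideal R}
    (hI : ∀ x : R, ∃ m : ℤ, x - m ∈ I) :
    Function.Surjective (algebraMap (ZMod n) (A ⧸ I.map q)) := by
  intro y
  obtain ⟨x, rfl⟩ := (Ideal.Quotient.mk_surjective.comp hq) y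
  obtain ⟨m, hm⟩ := hI x
  have hmap : q x - m ∈ I.map q := by
    rw [← map_intCast q, ← map_sub]
    exact Ideal.mem_map_of_mem q hm
  refine ⟨m, ?_⟩
  rw [map_intCast, Function.comp_apply, Ideal.Quotient.eq.mpr hmap, map_intCast]

namespace IsOrderOfConductor

variable {K : Type*} [Field K] [NumberField K] {f : ℕ} {O : Subalgebra ℤ K}

theorem natCast_mul_mem (hO : IsOrderOfConductor K f O) (y : 𝓞 K) : (f : K) * y ∈ O :=
  (hO _).mpr ⟨0, y, by simp⟩

theorem le_integralClosure_s18 (hO : IsOrderOfConductor K f O) : O ≤ integralClosure ℤ K := by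
  intro x hx
  obtain ⟨n, y, rfl⟩ := (hO x).mp hx
  exact add_mem (intCast_mem _ n) (mul_mem (natCast_mem _ f) y.2)

/-- The inclusion of the order `O` into the maximal order `𝓞 K`. -/
def toRingOfIntegers (hO : IsOrderOfConductor K f O) : O →ₐ[ℤ] 𝓞 K :=
  Subalgebra.inclusion hO.le_integralClosure_s18

theorem toRingOfIntegers_injective (hO : IsOrderOfConductor K f O) :
    Function.Injective hO.toRingOfIntegers :=
  Subalgebra.inclusion_injective hO.le_integralClosure_s18

theorem finite (hO : IsOrderOfConductor K f O) : Module.Finite ℤ O :=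
  .of_injective hO.toRingOfIntegers.toLinearMap hO.toRingOfIntegers_injective

theorem finrank_eq (hO : IsOrderOfConductor K f O) (hf : 0 < f) :
    Module.finrank ℤ O = Module.finrank ℚ K := by
  have := hO.finite
  rw [← RingOfIntegers.rank K]
  apply le_antisymm
  · exact LinearMap.finrank_le_finrank_of_injective (f := hO.toRingOfIntegers.toLinearMap)
      hO.toRingOfIntegers_injective
  · let mulConductor : 𝓞 K →ₗ[ℤ] O :=
      (LinearMap.mulLeft ℤ (f : K) ∘ₗ (Algebra.linearMap (𝓞 K) K).restrictScalars ℤ).codRestrict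
        O.toSubmodule hO.natCast_mul_mem
    refine LinearMap.finrank_le_finrank_of_injective (f := mulConductor) fun x y hxy ↦ ?_
    have hf0 : (f : K) ≠ 0 := Nat.cast_ne_zero.mpr hf.ne'
    exact RingOfIntegers.coe_injective (mul_left_cancel₀ hf0 (congrArg Subtype.val hxy))

/-- The ideal `f𝓞_K` of the order `O = ℤ + f𝓞_K`. -/
def conductorIdeal (hO : IsOrderOfConductor K f O) : Ideal O :=
  (Ideal.span {(f : 𝓞 K)}).comap hO.toRingOfIntegers

theorem mem_conductorIdeal (hO : IsOrderOfConductor K f O) {x : O} :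
    x ∈ hO.conductorIdeal ↔ ∃ y : 𝓞 K, (x : K) = f * y := by
  rw [conductorIdeal, Ideal.mem_comap, Ideal.mem_span_singleton]
  refine exists_congr fun y ↦ ?_
  rw [← RingOfIntegers.coe_injective.eq_iff, map_mul, map_natCast]
  rfl

theorem exists_sub_intCast_mem_conductorIdeal (hO : IsOrderOfConductor K f O) (x : O) :
    ∃ n : ℤ, x - n ∈ hO.conductorIdeal := by
  obtain ⟨n, y, hx⟩ := (hO x).mp x.2
  exact ⟨n, hO.mem_conductorIdeal.mpr ⟨y, by simp [hx]⟩⟩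

theorem conductorIdeal_sq_le (hO : IsOrderOfConductor K f O) {m : ℕ} (hm : m ∣ f) :
    hO.conductorIdeal ^ 2 ≤ Ideal.span {(m : O)} := by
  rw [pow_two, Ideal.mul_le]
  intro x hx y hy
  obtain ⟨u, hu⟩ := hO.mem_conductorIdeal.mp hx
  obtain ⟨v, hv⟩ := hO.mem_conductorIdeal.mp hy
  obtain ⟨k, rfl⟩ := hm
  rw [Ideal.mem_span_singleton]
  refine ⟨k * ⟨_, hO.natCast_mul_mem (u * v)⟩, Subtype.ext ?_⟩
  push_cast [hu, hv]
  ring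

theorem map_mk_conductorIdeal_sq_eq_bot (hO : IsOrderOfConductor K f O) {m : ℕ} (hm : m ∣ f) :
    (hO.conductorIdeal.map (Ideal.Quotient.mk (Ideal.span {(m : O)}))) ^ 2 = ⊥ := by
  rw [← Ideal.map_pow, Ideal.map_eq_bot_iff_le_ker, Ideal.mk_ker]
  exact hO.conductorIdeal_sq_le hm

end IsOrderOfConductor

theorem conductor_prime_orbit_sizes_general (K : Type*) [Field K] [NumberField K]
    (f : ℕ) (hf : 0 < f) (O : Subalgebra ℤ K) (hO : IsOrderOfConductor K f O)
    (ℓ : ℕ) (hℓ : ℓ.Prime) (hdvd : ℓ ∣ f)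
    (M : Type*) [AddCommGroup M] [Module (ZMod ℓ) M] [Module (ZMod ℓ)ᵐᵒᵖ M]
    [IsCentralScalar (ZMod ℓ) M] [Module.Finite (ZMod ℓ) M]
    (hM : Module.finrank (ZMod ℓ) M + 1 = Module.finrank ℚ K) :
    Nonempty ((O ⧸ Ideal.span {(ℓ : O)}) ≃+* TrivSqZeroExt (ZMod ℓ) M) ∧
    IsLocalRing (O ⧸ Ideal.span {(ℓ : O)}) ∧
    (∀ _ : IsLocalRing (O ⧸ Ideal.span {(ℓ : O)}),
      (IsLocalRing.maximalIdeal (O ⧸ Ideal.span {(ℓ : O)})) ^ 2 = ⊥) ∧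
    (∀ a : ℕ, 0 < a → ∀ P : O ⧸ Ideal.span {((ℓ ^ a : ℕ) : O)}, addOrderOf P = ℓ ^ a →
      ∃ c : ℕ, a - 1 ≤ c ∧ c ≤ Module.finrank ℚ K * a - 1 ∧
        Nat.card (O ⧸ annIdeal (R := O) P)ˣ = ℓ ^ c * (ℓ - 1) ∧
        Nat.card (MulAction.orbit (O ⧸ Ideal.span {((ℓ ^ a : ℕ) : O)})ˣ P) =
          ℓ ^ c * (ℓ - 1)) := by
  have : Fact ℓ.Prime := ⟨hℓ⟩
  have := hO.finite
  have := finite_quotient_span_natCast O ℓ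
  have := nontrivial_quotient_span_natCast O hℓ.one_lt
  have := charP_quotient_span_natCast O ℓ
  let := ZMod.algebra (O ⧸ Ideal.span {(ℓ : O)}) ℓ
  have hJ := hO.map_mk_conductorIdeal_sq_eq_bot hdvd
  have hk := bijective_algebraMap_quotient_of_sq_eq_bot (k := ZMod ℓ) hJ
    (surjective_algebraMap_zmod_quotient_map Ideal.Quotient.mk_surjective
      hO.exists_sub_intCast_mem_conductorIdeal)
  have := isLocalRing_of_sq_eq_bot hJ hk
  refine ⟨?_, this, fun _ ↦ ?_, fun a ha P hP ↦ ?_⟩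
  · obtain ⟨e⟩ := nonempty_algEquiv_trivSqZeroExt_of_finrank (M := M) hJ hk
      (by rw [hM, finrank_quotient_span_natCast, hO.finrank_eq hf])
    exact ⟨e.toRingEquiv⟩
  · rw [maximalIdeal_eq_of_bijective_algebraMap hk, hJ]
  · have hres := (natCard_residueField_eq_of_bijective_algebraMap hk).trans (Nat.card_zmod ℓ)
    rw [← hO.finrank_eq hf]
    exact exists_natCard_units_quotient_annIdeal_eq hℓ hres ha hP

/-- Let `O` be the order of conductor `f` and `ℓ` a prime dividing `f`.
Then `O/ℓO` is isomorphic to the dual numbers `(ℤ/ℓ)[ε]/(ε²)`; in particular it is local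
with maximal ideal of square zero.  Moreover for every `a ≥ 1` and every `P ∈ O/ℓ^a O` of
additive order `ℓ^a`, `#(O/I_P)ˣ = ℓ^c (ℓ-1)` for some `a-1 ≤ c ≤ 2a-1`, and the
`(O/ℓ^a O)ˣ`-orbit of `P` has that cardinality. -/
theorem conductor_prime_orbit_sizes (K : Type*) [Field K] [NumberField K]
    (hK : IsImagQuadratic K) (f : ℕ) (hf : 0 < f)
    (O : Subalgebra ℤ K) (hO : IsOrderOfConductor K f O)
    (ℓ : ℕ) (hℓ : ℓ.Prime) (hdvd : ℓ ∣ f) :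
    Nonempty ((↥O ⧸ Ideal.span {(ℓ : ↥O)}) ≃+* DualNumber (ZMod ℓ)) ∧
    IsLocalRing (↥O ⧸ Ideal.span {(ℓ : ↥O)}) ∧
    (∀ h : IsLocalRing (↥O ⧸ Ideal.span {(ℓ : ↥O)}),
      (IsLocalRing.maximalIdeal (↥O ⧸ Ideal.span {(ℓ : ↥O)})) ^ 2 = ⊥) ∧
    (∀ a : ℕ, 0 < a → ∀ P : ↥O ⧸ Ideal.span {((ℓ ^ a : ℕ) : ↥O)}, addOrderOf P = ℓ ^ a →
      ∃ c : ℕ, a - 1 ≤ c ∧ c ≤ 2 * a - 1 ∧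
        Nat.card (↥O ⧸ annIdeal (R := ↥O) P)ˣ = ℓ ^ c * (ℓ - 1) ∧
        Nat.card ↥(MulAction.orbit (↥O ⧸ Ideal.span {((ℓ ^ a : ℕ) : ↥O)})ˣ P) =
          ℓ ^ c * (ℓ - 1)) := by
  simpa only [hK.1] using conductor_prime_orbit_sizes_general K f hf O hO ℓ hℓ hdvd (ZMod ℓ)
    (by rw [hK.1, CommSemiring.finrank_self])
end

section
/- Let O be the order of conductor f in an imaginary quadratic field K with ring of integers O_K, and let ℓ^a > 2 be a prime power. Let T̃(O, ℓ^a) denote the least cardinality of an orbit of (O/ℓ^a O)^× on an element of additive order ℓ^a in O/ℓ^a O, and let k = ord_ℓ(f). Then: (1) if ℓ ∤ f, T̃(O, ℓ^a) = ℓ^{a−1}(ℓ−1) if ℓ is split in O, ℓ^{2a−2}(ℓ−1) if ℓ is ramified in O, and ℓ^{2a−2}(ℓ²−1) if ℓ is inert in O; (2) if ℓ ∣ f, T̃(O, ℓ^a) = ℓ^{a−1}(ℓ−1) if ℓ is split in O_K; ℓ^{a−1}(ℓ−1) if ℓ is inert in O_K and a ≤ 2k, and ℓ^{2a−2k−1}(ℓ−1)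 if ℓ is inert in O_K and a > 2k; ℓ^{a−1}(ℓ−1) if ℓ is ramified in O_K and a ≤ 2k+1, and ℓ^{2a−2k−2}(ℓ−1) if ℓ is ramified in O_K and a > 2k+1. -/
set_option synthInstance.maxHeartbeats 1000000
set_option maxHeartbeats 1000000

open NumberField

/-- The set of cardinalities of orbits of `(O/ℓ^a O)ˣ` on elements of `O/ℓ^a O` of additive
order `ℓ^a`; its least element is `T̃(O, ℓ^a)`. -/
def orbitSizes (R : Type*) [CommRing R] (n : ℕ) : Set ℕ :=
  {c : ℕ | ∃ P : R ⧸ Ideal.span {(n : R)}, addOrderOf P = n ∧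
    Nat.card ↥(MulAction.orbit (R ⧸ Ideal.span {(n : R)})ˣ P) = c}

/-!
Write `𝓞 K = ℤ[ω]` with `ω ^ 2 = m + t * ω`; then the order of conductor `f` is `ℤ[f * ω]`, with
parameters `f ^ 2 * m` and `f * t`, and its quotient `A` by `ℓ ^ a` is a quadratic algebra over
`ZMod (ℓ ^ a)`. The elements of additive order `ℓ ^ a` are those with coprime coordinates.

Scalar units act freely on such elements, so every orbit has at least `φ (ℓ ^ a)` elements. This is
attained as soon as `X ^ 2 = m + t * X` has a root modulo `ℓ ^ a`, because multiplication then has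
an eigenvector. In all other cases `A` is local, and the orbit of `P` has `#Aˣ / #ann P` elements.
The annihilator of `P` consists of the multiples `c • star P` with `c * norm P = 0`, so minimal
orbits belong to elements whose norm is as divisible by `ℓ` as possible. For an element of `𝓞 K`
not divisible by `ℓ` the `ℓ`-adic valuation of the norm is at most `0` if `ℓ` is inert, and at most
`1` if `ℓ` is ramified, as `𝓞 K` is integrally closed; passing to `ℤ[f * ω]` adds `2 * ord_ℓ f`.
-/

/-- The sizes of the orbits of `Aˣ` on the elements of additive order `n` of `A`, so that
`orbitSizes R n` is by definition `unitOrbitSizes (R ⧸ Ideal.span {(n : R)}) n`. -/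
def unitOrbitSizes (A : Type*) [CommRing A] (n : ℕ) : Set ℕ :=
  {c | ∃ P : A, addOrderOf P = n ∧ Nat.card (MulAction.orbit Aˣ P) = c}

section UnitOrbits

variable {A B R S : Type*} [CommRing A] [CommRing B] [CommRing R] [CommRing S]

theorem card_orbit_units_map (e : A ≃+* B) (P : A) :
    Nat.card (MulAction.orbit Bˣ (e P)) = Nat.card (MulAction.orbit Aˣ P) := by
  have image_orbit : e '' MulAction.orbit Aˣ P = MulAction.orbit Bˣ (e P) := by
    ext x
    constructor
    · rintro ⟨-, ⟨u, rfl⟩, rfl⟩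
      exact ⟨Units.map e u, by simp [Units.smul_def]⟩
    · rintro ⟨u, rfl⟩
      exact ⟨_, ⟨Units.map e.symm u, rfl⟩, by simp [Units.smul_def]⟩
  rw [← image_orbit, Nat.card_image_of_injective e.injective]

theorem unitOrbitSizes_congr (e : A ≃+* B) (n : ℕ) : unitOrbitSizes A n = unitOrbitSizes B n := by
  ext c
  rw [unitOrbitSizes, unitOrbitSizes, Set.mem_ofPred_eq, Set.mem_ofPred_eq,
    e.surjective.exists]
  simp only [card_orbit_units_map, ← addOrderOf_injective (e : A →+ B) e.injective]
  rfl

theorem map_span_natCast (e : R ≃+* S) (n : ℕ) :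
    Ideal.span {(n : S)} = (Ideal.span {(n : R)}).map (e : R →+* S) := by
  rw [Ideal.map_span, Set.image_singleton, map_natCast]

theorem orbitSizes_congr (e : R ≃+* S) (n : ℕ) : orbitSizes R n = orbitSizes S n :=
  unitOrbitSizes_congr (Ideal.quotientEquiv _ _ e (map_span_natCast e n)) n

theorem splitsIn_congr (e : R ≃+* S) (ℓ : ℕ) : SplitsIn R ℓ ↔ SplitsIn S ℓ :=
  let q := Ideal.quotientEquiv _ _ e (map_span_natCast e ℓ)
  ⟨fun ⟨g⟩ ↦ ⟨q.symm.trans g⟩, fun ⟨g⟩ ↦ ⟨q.trans g⟩⟩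

theorem inertIn_congr (e : R ≃+* S) (ℓ : ℕ) : InertIn R ℓ ↔ InertIn S ℓ :=
  let q := Ideal.quotientEquiv _ _ e (map_span_natCast e ℓ)
  ⟨q.symm.toMulEquiv.isField, q.toMulEquiv.isField⟩

theorem isUnit_one_add_of_mul_eq_zero [IsLocalRing A] {P z : A} (hP : P ≠ 0) (hz : z * P = 0) :
    IsUnit (1 + z) := by
  have nonunit_neg : -z ∈ nonunits A := fun h ↦ hP <| h.mul_right_eq_zero.mp (by simp [hz])
  simpa using IsLocalRing.isUnit_one_sub_self_of_mem_nonunits _ nonunit_neg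

theorem card_stabilizer_units [IsLocalRing A] {P : A} (hP : P ≠ 0) :
    Nat.card (MulAction.stabilizer Aˣ P) = Nat.card {z : A // z * P = 0} := by
  have sub_one_mul {u : Aˣ} (hu : u ∈ MulAction.stabilizer Aˣ P) : ((u : A) - 1) * P = 0 := by
    rw [sub_mul, one_mul, sub_eq_zero]
    exact hu
  refine Nat.card_eq_of_bijective (fun u ↦ ⟨(u : Aˣ) - 1, sub_one_mul u.2⟩) ⟨fun u v h ↦ ?_, ?_⟩
  · exact Subtype.ext <| Units.ext <| sub_left_injective <| congrArg Subtype.val h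
  · rintro ⟨z, hz⟩
    obtain ⟨u, hu⟩ := isUnit_one_add_of_mul_eq_zero hP hz
    exact ⟨⟨u, by simp [MulAction.mem_stabilizer_iff, Units.smul_def, hu, add_mul, hz]⟩,
      by simp [hu]⟩

theorem card_orbit_mul_card_annihilator [IsLocalRing A] {P : A} (hP : P ≠ 0) :
    Nat.card (MulAction.orbit Aˣ P) * Nat.card {z : A // z * P = 0} = Nat.card Aˣ := by
  rw [← card_stabilizer_units hP, ← Nat.card_prod]
  exact Nat.card_congr (MulAction.orbitProdStabilizerEquivGroup Aˣ P)

theorem card_units_mul_card_of_surjective [Finite A] {k : Type*} [Field k] (φ : A →+* k)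
    [IsLocalHom φ] (hφ : Function.Surjective φ) :
    Nat.card Aˣ * Nat.card k = Nat.card A * (Nat.card k - 1) := by
  have : Finite k := .of_surjective φ hφ
  have card_ker : Nat.card A = Nat.card k * Nat.card (RingHom.ker φ) := by
    rw [(RingHom.ker φ).toAddSubgroup.card_eq_card_quotient_mul_card_addSubgroup]
    exact congrArg (· * _) (Nat.card_congr (RingHom.quotientKerEquivOfSurjective hφ).toEquiv)
  have card_nonunits : Nat.card {z : A // ¬IsUnit z} = Nat.card (RingHom.ker φ) :=
    Nat.card_congr <| Equiv.subtypeEquivRight fun z ↦ by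
      rw [RingHom.mem_ker, ← isUnit_map_iff φ z, isUnit_iff_ne_zero, not_not]
  have card_isUnit : Nat.card Aˣ = Nat.card {z : A // IsUnit z} :=
    Nat.card_congr Submonoid.unitsTypeEquivIsUnitSubmonoid.toEquiv
  have card_split : Nat.card A = Nat.card Aˣ + Nat.card (RingHom.ker φ) := by
    rw [← card_nonunits, card_isUnit, ← Nat.card_sum]
    classical exact Nat.card_congr (Equiv.sumCompl _).symm
  obtain ⟨q, hq⟩ : ∃ q, Nat.card k = q + 1 := Nat.exists_eq_succ_of_ne_zero Nat.card_pos.ne'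
  rw [hq] at card_ker ⊢
  have card_units : Nat.card Aˣ = q * Nat.card (RingHom.ker φ) := by linarith
  rw [Nat.add_sub_cancel, card_units, card_ker]
  ring

theorem card_units_le_card_orbit [Finite A] [Algebra R A] {P : A}
    (hP : ∀ c : R, c • P = 0 → c = 0) : Nat.card Rˣ ≤ Nat.card (MulAction.orbit Aˣ P) := by
  refine Nat.card_le_card_of_injective
    (fun u : Rˣ ↦ (⟨Units.map (algebraMap R A) u • P, MulAction.mem_orbit _ _⟩ :
      MulAction.orbit Aˣ P)) fun u v h ↦ Units.ext <| sub_eq_zero.mp <| hP _ ?_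
  simpa [Units.smul_def, ← Algebra.smul_def, sub_smul, sub_eq_zero] using congrArg Subtype.val h

theorem card_orbit_le_card_units [Finite R] [Algebra R A] (φ : A →+* R) {P : A}
    (hφ : ∀ z, z * P = φ z • P) : Nat.card (MulAction.orbit Aˣ P) ≤ Nat.card Rˣ := by
  have orbit_subset : MulAction.orbit Aˣ P ⊆ Set.range fun u : Rˣ ↦ (u : R) • P := by
    rintro - ⟨u, rfl⟩
    exact ⟨Units.map φ u, by simp [Units.smul_def, hφ]⟩
  exact (Nat.card_mono (Set.finite_range _) orbit_subset).trans (Finite.card_range_le _)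

end UnitOrbits

section ZModTorsion

theorem addOrderOf_eq_iff_forall_smul {n : ℕ} {M : Type*} [AddCommGroup M] [Module (ZMod n) M]
    {P : M} : addOrderOf P = n ↔ ∀ c : ZMod n, c • P = 0 → c = 0 := by
  constructor
  · intro hP c hc
    obtain ⟨c, rfl⟩ := ZMod.intCast_surjective c
    rwa [ZMod.intCast_zmod_eq_zero_iff_dvd, ← hP, addOrderOf_dvd_iff_zsmul_eq_zero,
      ← Int.cast_smul_eq_zsmul (ZMod n)]
  · intro hP
    apply Nat.dvd_antisymm
    · rw [addOrderOf_dvd_iff_nsmul_eq_zero, ← Nat.cast_smul_eq_nsmul (ZMod n), ZMod.natCast_self,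
        zero_smul]
    · rw [← ZMod.natCast_eq_zero_iff]
      exact hP _ (by rw [Nat.cast_smul_eq_nsmul, addOrderOf_nsmul_eq_zero])

theorem isCoprime_iff_forall_mul_eq_zero {R : Type*} [CommRing R] [IsBezout R] [Finite R]
    {x y : R} : IsCoprime x y ↔ ∀ c : R, c * x = 0 → c * y = 0 → c = 0 := by
  constructor
  · rintro ⟨p, q, h⟩ c hx hy
    linear_combination -c * h + p * hx + q * hy
  · refine fun h ↦ IsRelPrime.isCoprime ?_
    rintro d ⟨x', rfl⟩ ⟨y', rfl⟩
    rw [isUnit_iff_mem_nonZeroDivisors_of_finite, mem_nonZeroDivisors_iff_right]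
    exact fun c hc ↦ h c (by rw [← mul_assoc, hc, zero_mul]) (by rw [← mul_assoc, hc, zero_mul])

theorem card_annihilator_intCast (n : ℕ) [NeZero n] (x : ℤ) :
    Nat.card {c : ZMod n // c * x = 0} = Int.gcd n x := by
  have ker_eq (c : ZMod n) : c * x = 0 ↔ c ∈ (nsmulAddMonoidHom x.natAbs : ZMod n →+ _).ker := by
    rw [AddMonoidHom.mem_ker, nsmulAddMonoidHom_apply, nsmul_eq_mul, mul_comm]
    obtain h | h := x.natAbs_eq <;> rw [h] <;> simp
  rw [Nat.card_congr (Equiv.subtypeEquivRight ker_eq)]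
  exact (IsAddCyclic.card_nsmulAddMonoidHom_ker _ _).trans (by rw [Nat.card_zmod]; rfl)

end ZModTorsion

section QuadraticAlgebras

variable {R S : Type*} [CommRing R] [CommRing S] {a b : R} {a' b' : S}

/-- Base change of a quadratic algebra along `g : R →+* S`. The parameters of the target are free
variables, so that e.g. the reduction of `QuadraticAlgebra ℤ a b` modulo `n` has the literal casts
of `a` and `b` as its parameters. -/
def quadraticMap (g : R →+* S) (ha : g a = a') (hb : g b = b') :
    QuadraticAlgebra R a b →+* QuadraticAlgebra S a' b' where
  toFun z := ⟨g z.re, g z.im⟩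
  map_zero' := by ext <;> simp
  map_one' := by ext <;> simp [QuadraticAlgebra.re_one, QuadraticAlgebra.im_one]
  map_add' z w := by ext <;> simp
  map_mul' z w := by ext <;> simp [ha, hb]

theorem norm_quadraticMap (g : R →+* S) (ha : g a = a') (hb : g b = b')
    (z : QuadraticAlgebra R a b) : (quadraticMap g ha hb z).norm = g z.norm := by
  simp [QuadraticAlgebra.norm_def, quadraticMap, ha, hb]

theorem quadraticMap_surjective {g : R →+* S} (hg : Function.Surjective g) (ha : g a = a')
    (hb : g b = b') : Function.Surjective (quadraticMap g ha hb) := by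
  rintro ⟨x, y⟩
  obtain ⟨⟨x, rfl⟩, ⟨y, rfl⟩⟩ := hg x, hg y
  exact ⟨⟨x, y⟩, rfl⟩

instance isLocalHom_quadraticMap (g : R →+* S) [IsLocalHom g] (ha : g a = a') (hb : g b = b') :
    IsLocalHom (quadraticMap g ha hb) where
  map_nonunit z hz := by
    rw [QuadraticAlgebra.isUnit_iff_norm_isUnit, norm_quadraticMap] at hz
    exact QuadraticAlgebra.isUnit_iff_norm_isUnit.mpr (hz.of_map g)

/-- Substituting `u • ω` for the generator. For `R = ℤ` this is the inclusion of the order of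
conductor `u` of a quadratic ring into that ring. -/
def scaleHom (u a b : R) :
    QuadraticAlgebra R (u ^ 2 * a) (u * b) →ₐ[R] QuadraticAlgebra R a b :=
  QuadraticAlgebra.lift ⟨u • QuadraticAlgebra.omega, by
    ext <;> simp [QuadraticAlgebra.re_one, QuadraticAlgebra.im_one] <;> ring⟩

theorem scaleHom_apply (u a b : R) (z : QuadraticAlgebra R (u ^ 2 * a) (u * b)) :
    scaleHom u a b z = ⟨z.re, u * z.im⟩ := by
  ext <;> simp [scaleHom, QuadraticAlgebra.lift, QuadraticAlgebra.re_one,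
    QuadraticAlgebra.im_one, mul_comm]

theorem norm_scaleHom (u a b : R) (z : QuadraticAlgebra R (u ^ 2 * a) (u * b)) :
    (scaleHom u a b z).norm = z.norm := by
  rw [scaleHom_apply, QuadraticAlgebra.norm_def, QuadraticAlgebra.norm_def]
  ring

theorem scaleHom_injective [NoZeroDivisors R] {u : R} (hu : u ≠ 0) (a b : R) :
    Function.Injective (scaleHom u a b) := fun z w h ↦ by
  rw [scaleHom_apply, scaleHom_apply, QuadraticAlgebra.mk.injEq] at h
  exact QuadraticAlgebra.ext h.1 (mul_left_cancel₀ hu h.2)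

theorem mem_range_scaleHom {u a b : R} {x : QuadraticAlgebra R a b} :
    x ∈ (scaleHom u a b).range ↔
      ∃ (c : R) (y : QuadraticAlgebra R a b), x = algebraMap _ _ c + u • y := by
  constructor
  · rintro ⟨z, rfl⟩
    refine ⟨z.re, ⟨0, z.im⟩, ?_⟩
    change scaleHom u a b z = _
    rw [scaleHom_apply]
    ext <;> simp
  · rintro ⟨c, y, rfl⟩
    refine ⟨⟨c + u * y.re, y.im⟩, ?_⟩
    change scaleHom u a b _ = _
    rw [scaleHom_apply]
    ext <;> simp

theorem card_quadraticAlgebra {R : Type*} (a b : R) :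
    Nat.card (QuadraticAlgebra R a b) = Nat.card R ^ 2 := by
  rw [Nat.card_congr (QuadraticAlgebra.equivProd a b), Nat.card_prod, sq]

instance finite_quadraticAlgebra [Finite R] : Finite (QuadraticAlgebra R a b) :=
  .of_equiv _ (QuadraticAlgebra.equivProd a b).symm

theorem smul_star_mul_self_eq_zero_iff {P : QuadraticAlgebra R a b} {c : R} :
    c • star P * P = 0 ↔ c * P.norm = 0 := by
  rw [smul_mul_assoc, mul_comm (star P), ← QuadraticAlgebra.algebraMap_norm_eq_mul_star,
    Algebra.smul_def, ← map_mul, map_eq_zero_iff _ QuadraticAlgebra.algebraMap_injective]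

theorem exists_eq_smul_star_of_mul_eq_zero {P z : QuadraticAlgebra R a b}
    (hP : IsCoprime P.re P.im) (hz : z * P = 0) : ∃ c : R, z = c • star P := by
  obtain ⟨p, q, hpq⟩ := hP
  have im_eq : z.re * P.im + z.im * P.re + b * z.im * P.im = 0 :=
    congrArg QuadraticAlgebra.im hz
  refine ⟨p * z.re - (q - p * b) * z.im, ?_⟩
  ext
  · simp only [QuadraticAlgebra.re_smul, QuadraticAlgebra.re_star, smul_eq_mul]
    linear_combination -z.re * hpq + (q - p * b) * im_eq
  · simp only [QuadraticAlgebra.im_smul, QuadraticAlgebra.im_star, smul_eq_mul]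
    linear_combination -z.im * hpq + p * im_eq

theorem card_annihilator_of_isCoprime {P : QuadraticAlgebra R a b} (hP : IsCoprime P.re P.im) :
    Nat.card {z : QuadraticAlgebra R a b // z * P = 0} = Nat.card {c : R // c * P.norm = 0} := by
  symm
  refine Nat.card_eq_of_bijective
    (fun c ↦ ⟨(c : R) • star P, smul_star_mul_self_eq_zero_iff.mpr c.2⟩) ⟨?_, ?_⟩
  · rintro ⟨c, _⟩ ⟨d, _⟩ h
    obtain ⟨p, q, hpq⟩ := hP
    have star_eq : c • star P = d • star P := congrArg Subtype.val h
    have re_eq : c * (P.re + b * P.im) = d * (P.re + b * P.im) :=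
      congrArg QuadraticAlgebra.re star_eq
    have im_eq : c * -P.im = d * -P.im := congrArg QuadraticAlgebra.im star_eq
    refine Subtype.ext ?_
    linear_combination (d - c) * hpq + p * re_eq + (p * b - q) * im_eq
  · rintro ⟨z, hz⟩
    obtain ⟨c, rfl⟩ := exists_eq_smul_star_of_mul_eq_zero hP hz
    exact ⟨⟨c, smul_star_mul_self_eq_zero_iff.mp hz⟩, rfl⟩

theorem addOrderOf_eq_iff_isCoprime {n : ℕ} [NeZero n] {a b : ZMod n}
    {P : QuadraticAlgebra (ZMod n) a b} : addOrderOf P = n ↔ IsCoprime P.re P.im := by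
  have : IsBezout (ZMod n) := ZMod.intCast_surjective.isBezout (Int.castRingHom (ZMod n))
  rw [addOrderOf_eq_iff_forall_smul, isCoprime_iff_forall_mul_eq_zero]
  simp [QuadraticAlgebra.ext_iff]

theorem isCoprime_repr_one {A : Type*} [CommRing A] [Algebra R A]
    (e : Module.Basis (Fin 2) R A) : IsCoprime (e.repr 1 0) (e.repr 1 1) := by
  refine ⟨e.repr (e 0 * e 0) 0, e.repr (e 1 * e 0) 0, ?_⟩
  have one_mul_expand : e.repr 1 0 • (e 0 * e 0) + e.repr 1 1 • (e 1 * e 0) = e 0 := by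
    conv_rhs => rw [← one_mul (e 0), ← e.sum_repr 1, Fin.sum_univ_two, add_mul, smul_mul_assoc,
      smul_mul_assoc]
  simpa [mul_comm] using congrArg (e.repr · 0) one_mul_expand

theorem exists_forall_eq_smul_one_add_smul {A : Type*} [CommRing A] [Algebra R A]
    (e : Module.Basis (Fin 2) R A) : ∃ w : A, ∀ x : A, ∃ s r : R, x = s • 1 + r • w := by
  obtain ⟨p, q, hpq⟩ := isCoprime_repr_one e
  refine ⟨p • e 1 - q • e 0, fun x ↦ ⟨p * e.repr x 0 + q * e.repr x 1,
    e.repr 1 0 * e.repr x 1 - e.repr 1 1 * e.repr x 0, e.ext_elem <| Fin.forall_fin_two.mpr ?_⟩⟩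
  simp only [map_add, map_sub, map_smul, Finsupp.add_apply, Finsupp.sub_apply, Finsupp.smul_apply,
    Module.Basis.repr_self, Finsupp.single_apply, smul_eq_mul, one_ne_zero, zero_ne_one, if_true,
    if_false]
  constructor
  · linear_combination -e.repr x 0 * hpq
  · linear_combination -e.repr x 1 * hpq

theorem exists_algEquiv_quadraticAlgebra [Nontrivial R] {A : Type*} [CommRing A] [Algebra R A]
    (e : Module.Basis (Fin 2) R A) :
    ∃ a b : R, Nonempty (A ≃ₐ[R] QuadraticAlgebra R a b) := by
  obtain ⟨w, hw⟩ := exists_forall_eq_smul_one_add_smul e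
  obtain ⟨a, b, hab⟩ := hw (w * w)
  let φ : QuadraticAlgebra R a b →ₐ[R] A := QuadraticAlgebra.lift ⟨w, hab⟩
  have surjective : Function.Surjective φ := fun x ↦ by
    obtain ⟨s, r, rfl⟩ := hw x
    exact ⟨⟨s, r⟩, by simp [φ, QuadraticAlgebra.lift, Algebra.smul_def]⟩
  have : Module.Free R A := .of_basis e
  have : Module.Finite R A := .of_basis e
  have bijective : Function.Bijective φ :=
    OrzechProperty.bijective_of_surjective_of_finrank_le φ.toLinearMap surjective <| by
      rw [QuadraticAlgebra.finrank_eq_two, Module.finrank_eq_card_basis e, Fintype.card_fin]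
  exact ⟨a, b, ⟨(AlgEquiv.ofBijective φ bijective).symm⟩⟩

end QuadraticAlgebras

section Roots

variable {R : Type*} [CommRing R] {a b r : R}

/-- Evaluation of the generator of a quadratic algebra at a root of its defining polynomial. -/
def evalRoot (hr : r ^ 2 = a + b * r) : QuadraticAlgebra R a b →ₐ[R] R :=
  QuadraticAlgebra.lift ⟨r, by simpa [sq] using hr⟩

theorem evalRoot_apply (hr : r ^ 2 = a + b * r) (z : QuadraticAlgebra R a b) :
    evalRoot hr z = z.re + z.im * r := by
  simp [evalRoot, QuadraticAlgebra.lift]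

theorem evalRoot_surjective (hr : r ^ 2 = a + b * r) : Function.Surjective (evalRoot hr) :=
  fun x ↦ ⟨algebraMap R _ x, AlgHom.commutes _ x⟩

/- `⟨r - b, 1⟩` is `ω` minus the conjugate root `b - r`; annihilated by `ω - r`, it spans an
eigenline for multiplication. -/
theorem mul_eq_evalRoot_smul (hr : r ^ 2 = a + b * r) (z : QuadraticAlgebra R a b) :
    z * ⟨r - b, 1⟩ = evalRoot hr z • (⟨r - b, 1⟩ : QuadraticAlgebra R a b) := by
  rw [evalRoot_apply]
  ext
  · simp only [QuadraticAlgebra.re_mul, QuadraticAlgebra.re_smul, smul_eq_mul]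
    linear_combination -z.im * hr
  · simp only [QuadraticAlgebra.im_mul, QuadraticAlgebra.im_smul, smul_eq_mul]
    ring

theorem norm_eq_evalRoot_sq (hr : r ^ 2 = a + b * r) (hb : 2 * r = b)
    (z : QuadraticAlgebra R a b) : z.norm = evalRoot hr z ^ 2 := by
  rw [evalRoot_apply, QuadraticAlgebra.norm_def]
  linear_combination (-z.re * z.im - r * z.im ^ 2) * hb + z.im ^ 2 * hr

theorem isLocalHom_evalRoot (hr : r ^ 2 = a + b * r) (hb : 2 * r = b) :
    IsLocalHom (evalRoot hr).toRingHom where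
  map_nonunit z hz := by
    rw [QuadraticAlgebra.isUnit_iff_norm_isUnit, norm_eq_evalRoot_sq hr hb]
    exact hz.pow 2

theorem exists_root_of_isNilpotent (h : IsNilpotent (r ^ 2 - (a + b * r)))
    (h' : IsUnit (2 * r - b)) : ∃ s : R, s ^ 2 = a + b * s := by
  open Polynomial in
  obtain ⟨s, ⟨-, hs⟩, -⟩ := existsUnique_nilpotent_sub_and_aeval_eq_zero
    (P := (X ^ 2 - (C a + C b * X) : R[X])) (x := r) (by simpa using h)
    (by simpa [one_add_one_eq_two] using h')
  exact ⟨s, sub_eq_zero.mp (by simpa using hs)⟩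

theorem isLeast_unitOrbitSizes_of_root {n : ℕ} [NeZero n] {a b r : ZMod n}
    (hr : r ^ 2 = a + b * r) :
    IsLeast (unitOrbitSizes (QuadraticAlgebra (ZMod n) a b) n) n.totient := by
  have card_units : Nat.card (ZMod n)ˣ = n.totient := by
    rw [Nat.card_eq_fintype_card, ZMod.card_units_eq_totient]
  have lower {P : QuadraticAlgebra (ZMod n) a b} (hP : addOrderOf P = n) :
      n.totient ≤ Nat.card (MulAction.orbit (QuadraticAlgebra (ZMod n) a b)ˣ P) :=
    card_units ▸ card_units_le_card_orbit (addOrderOf_eq_iff_forall_smul.mp hP)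
  constructor
  · have order : addOrderOf (⟨r - b, 1⟩ : QuadraticAlgebra (ZMod n) a b) = n :=
      addOrderOf_eq_iff_isCoprime.mpr isCoprime_one_right
    refine ⟨_, order, le_antisymm ?_ (lower order)⟩
    exact card_units ▸ card_orbit_le_card_units (evalRoot hr).toRingHom (mul_eq_evalRoot_smul hr)
  · rintro _ ⟨P, hP, rfl⟩
    exact lower hP

theorem root_scale (u : R) (hr : r ^ 2 = a + b * r) :
    (u * r) ^ 2 = u ^ 2 * a + u * b * (u * r) := by
  linear_combination u ^ 2 * hr

end Roots

section Field

variable {F : Type*} [Field F] {a b : F}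

theorem root_scale_iff {u r : F} (hu : u ≠ 0) :
    (u * r) ^ 2 = u ^ 2 * a + u * b * (u * r) ↔ r ^ 2 = a + b * r :=
  (Eq.congr (by ring) (by ring)).trans (mul_right_inj' (pow_ne_zero 2 hu))

theorem isField_quadraticAlgebra_iff :
    IsField (QuadraticAlgebra F a b) ↔ ∀ r : F, r ^ 2 ≠ a + b * r := by
  constructor
  · intro h r hr
    have eigen := mul_eq_evalRoot_smul hr ⟨-r, 1⟩
    rw [evalRoot_apply, one_mul, neg_add_cancel, zero_smul] at eigen
    let := h.toField
    rcases mul_eq_zero.mp eigen with h0 | h0 <;>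
      exact one_ne_zero (congrArg QuadraticAlgebra.im h0)
  · intro h
    have : Fact (∀ r : F, r ^ 2 ≠ a + b * r) := ⟨h⟩
    exact Field.toIsField _

theorem bijective_evalRoot_prod {r : F} (hr : r ^ 2 = a + b * r)
    (hr' : (b - r) ^ 2 = a + b * (b - r)) (hb : 2 * r ≠ b) :
    Function.Bijective ((evalRoot hr).prod (evalRoot hr')) := by
  have hb' : 2 * r - b ≠ 0 := sub_ne_zero.mpr hb
  have finrank_eq : Module.finrank F (QuadraticAlgebra F a b) = Module.finrank F (F × F) := by
    rw [QuadraticAlgebra.finrank_eq_two, Module.finrank_prod, Module.finrank_self]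
  have injective : Function.Injective ((evalRoot hr).prod (evalRoot hr')) := by
    rw [injective_iff_map_eq_zero]
    intro z hz
    rw [AlgHom.prod_apply, evalRoot_apply, evalRoot_apply, Prod.mk_eq_zero] at hz
    have im_eq : z.im = 0 := by
      refine (mul_eq_zero.mp ?_).resolve_right hb'
      linear_combination hz.1 - hz.2
    exact QuadraticAlgebra.ext (by simpa [im_eq] using hz.1) im_eq
  exact ⟨injective, (LinearMap.injective_iff_surjective_of_finrank_eq_finrank finrank_eq
    (f := ((evalRoot hr).prod (evalRoot hr')).toLinearMap)).mp injective⟩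

theorem nonempty_ringEquiv_prod_iff :
    Nonempty (QuadraticAlgebra F a b ≃+* F × F) ↔ ∃ r : F, r ^ 2 = a + b * r ∧ 2 * r ≠ b := by
  constructor
  · rintro ⟨e⟩
    have not_isField : ¬IsField (QuadraticAlgebra F a b) := fun h ↦ by
      have := (e.symm.toMulEquiv.isField h).isDomain
      exact false_of_nontrivial_of_product_domain F F
    simp only [isField_quadraticAlgebra_iff, not_forall, not_not] at not_isField
    obtain ⟨r, hr⟩ := not_isField
    refine ⟨r, hr, fun hb ↦ ?_⟩
    have nilpotent : IsNilpotent (⟨r - b, 1⟩ : QuadraticAlgebra F a b) := by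
      refine ⟨2, ?_⟩
      rw [sq, mul_eq_evalRoot_smul hr, evalRoot_apply, ← hb]
      simp [two_mul]
    have eq_zero := (nilpotent.map e).eq_zero
    rw [map_eq_zero_iff e e.injective] at eq_zero
    exact one_ne_zero (congrArg QuadraticAlgebra.im eq_zero)
  · rintro ⟨r, hr, hb⟩
    have hr' : (b - r) ^ 2 = a + b * (b - r) := by linear_combination hr
    exact ⟨(AlgEquiv.ofBijective _ (bijective_evalRoot_prod hr hr' hb)).toRingEquiv⟩

end Field

section Reduction

variable {m t : ℤ} {n ℓ a : ℕ}

theorem natCast_dvd_iff {z : QuadraticAlgebra ℤ m t} :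
    (n : QuadraticAlgebra ℤ m t) ∣ z ↔ (n : ℤ) ∣ z.re ∧ (n : ℤ) ∣ z.im := by
  rw [← QuadraticAlgebra.algebraMap_dvd_iff, map_natCast]

/-- Reduction modulo `n` of the quadratic ring `ℤ[ω]` with `ω ^ 2 = m + t * ω`. -/
def reduceMod (n : ℕ) (m t : ℤ) : QuadraticAlgebra ℤ m t →+* QuadraticAlgebra (ZMod n) m t :=
  quadraticMap (Int.castRingHom (ZMod n)) rfl rfl

theorem reduceMod_surjective (n : ℕ) (m t : ℤ) : Function.Surjective (reduceMod n m t) :=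
  quadraticMap_surjective ZMod.intCast_surjective rfl rfl

theorem norm_reduceMod (z : QuadraticAlgebra ℤ m t) : (reduceMod n m t z).norm = z.norm :=
  norm_quadraticMap _ _ _ z

theorem reduceMod_eq_zero_iff {z : QuadraticAlgebra ℤ m t} :
    reduceMod n m t z = 0 ↔ (n : QuadraticAlgebra ℤ m t) ∣ z := by
  rw [natCast_dvd_iff, ← ZMod.intCast_zmod_eq_zero_iff_dvd, ← ZMod.intCast_zmod_eq_zero_iff_dvd,
    QuadraticAlgebra.ext_iff]
  rfl

theorem ker_reduceMod (n : ℕ) (m t : ℤ) :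
    RingHom.ker (reduceMod n m t) = Ideal.span {(n : QuadraticAlgebra ℤ m t)} := by
  ext z
  rw [RingHom.mem_ker, reduceMod_eq_zero_iff, Ideal.mem_span_singleton]

/-- `ℤ[ω] / n` is the quadratic algebra over `ZMod n` with the reduced parameters. -/
noncomputable def quotientSpanEquiv (n : ℕ) (m t : ℤ) :
    (QuadraticAlgebra ℤ m t ⧸ Ideal.span {(n : QuadraticAlgebra ℤ m t)}) ≃+*
      QuadraticAlgebra (ZMod n) m t :=
  (Ideal.quotEquivOfEq (ker_reduceMod n m t).symm).trans
    (RingHom.quotientKerEquivOfSurjective (reduceMod_surjective n m t))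

theorem orbitSizes_quadraticAlgebra (n : ℕ) (m t : ℤ) :
    orbitSizes (QuadraticAlgebra ℤ m t) n = unitOrbitSizes (QuadraticAlgebra (ZMod n) m t) n :=
  unitOrbitSizes_congr (quotientSpanEquiv n m t) n

theorem splitsIn_iff [Fact ℓ.Prime] :
    SplitsIn (QuadraticAlgebra ℤ m t) ℓ ↔ ∃ r : ZMod ℓ, r ^ 2 = m + t * r ∧ 2 * r ≠ t := by
  rw [← nonempty_ringEquiv_prod_iff]
  exact ⟨fun ⟨e⟩ ↦ ⟨(quotientSpanEquiv ℓ m t).symm.trans e⟩,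
    fun ⟨e⟩ ↦ ⟨(quotientSpanEquiv ℓ m t).trans e⟩⟩

theorem inertIn_iff [Fact ℓ.Prime] :
    InertIn (QuadraticAlgebra ℤ m t) ℓ ↔ ∀ r : ZMod ℓ, r ^ 2 ≠ m + t * r := by
  rw [← isField_quadraticAlgebra_iff]
  exact ⟨(quotientSpanEquiv ℓ m t).symm.toMulEquiv.isField,
    (quotientSpanEquiv ℓ m t).toMulEquiv.isField⟩

theorem exists_double_root [Fact ℓ.Prime] (split : ¬SplitsIn (QuadraticAlgebra ℤ m t) ℓ)
    (inert : ¬InertIn (QuadraticAlgebra ℤ m t) ℓ) :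
    ∃ s : ZMod ℓ, s ^ 2 = m + t * s ∧ 2 * s = t := by
  simp only [inertIn_iff, not_forall, not_not] at inert
  obtain ⟨s, hs⟩ := inert
  exact ⟨s, hs, by_contra fun h ↦ split (splitsIn_iff.mpr ⟨s, hs, h⟩)⟩

theorem splitsIn_scale_iff [Fact ℓ.Prime] {f : ℕ} (hf : ¬ℓ ∣ f) :
    SplitsIn (QuadraticAlgebra ℤ (f ^ 2 * m) (f * t)) ℓ ↔ SplitsIn (QuadraticAlgebra ℤ m t) ℓ := by
  have hf0 : (f : ZMod ℓ) ≠ 0 := by rwa [Ne, ZMod.natCast_eq_zero_iff]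
  rw [splitsIn_iff, splitsIn_iff, (mul_left_surjective₀ hf0).exists]
  push_cast
  refine exists_congr fun r ↦ and_congr (root_scale_iff hf0) (not_congr ?_)
  rw [mul_left_comm, mul_right_inj' hf0]

theorem inertIn_scale_iff [Fact ℓ.Prime] {f : ℕ} (hf : ¬ℓ ∣ f) :
    InertIn (QuadraticAlgebra ℤ (f ^ 2 * m) (f * t)) ℓ ↔ InertIn (QuadraticAlgebra ℤ m t) ℓ := by
  have hf0 : (f : ZMod ℓ) ≠ 0 := by rwa [Ne, ZMod.natCast_eq_zero_iff]
  rw [inertIn_iff, inertIn_iff, (mul_left_surjective₀ hf0).forall]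
  push_cast
  exact forall_congr' fun r ↦ not_congr (root_scale_iff hf0)

end Reduction

section LocalAtPrime

variable {m t : ℤ} {ℓ a M c : ℕ}

theorem isLocalHom_castHom_pow (n : ℕ) {a : ℕ} (ha : a ≠ 0) :
    IsLocalHom (ZMod.castHom (dvd_pow_self n ha) (ZMod n)) where
  map_nonunit x hx := by
    obtain ⟨x, rfl⟩ := ZMod.intCast_surjective x
    rw [map_intCast, ZMod.coe_int_isUnit_iff_isCoprime] at hx
    rw [ZMod.coe_int_isUnit_iff_isCoprime, Nat.cast_pow]
    exact hx.pow_left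

theorem exists_root_of_splitsIn [Fact ℓ.Prime] (ha : a ≠ 0)
    (split : SplitsIn (QuadraticAlgebra ℤ m t) ℓ) : ∃ s : ZMod (ℓ ^ a), s ^ 2 = m + t * s := by
  obtain ⟨r, hr, simple⟩ := splitsIn_iff.mp split
  obtain ⟨r, rfl⟩ := ZMod.intCast_surjective r
  apply exists_root_of_isNilpotent (r := (r : ZMod (ℓ ^ a)))
  · have dvd : (ℓ : ℤ) ∣ r ^ 2 - (m + t * r) := by
      rw [← ZMod.intCast_zmod_eq_zero_iff_dvd]
      push_cast
      exact sub_eq_zero.mpr hr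
    have dvd_pow : ((ℓ ^ a : ℕ) : ℤ) ∣ (r ^ 2 - (m + t * r)) ^ a := by
      exact_mod_cast pow_dvd_pow_of_dvd dvd a
    rw [← ZMod.intCast_zmod_eq_zero_iff_dvd] at dvd_pow
    exact ⟨a, mod_cast dvd_pow⟩
  · have := isLocalHom_castHom_pow ℓ ha
    refine IsUnit.of_map (ZMod.castHom (dvd_pow_self ℓ ha) (ZMod ℓ)) _ ?_
    rw [map_sub, map_mul, map_ofNat, map_intCast, map_intCast, isUnit_iff_ne_zero]
    exact sub_ne_zero.mpr simple

theorem isLeast_of_root [Fact ℓ.Prime] (ha : a ≠ 0) {r : ZMod (ℓ ^ a)} (hr : r ^ 2 = m + t * r) :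
    IsLeast (orbitSizes (QuadraticAlgebra ℤ m t) (ℓ ^ a)) (ℓ ^ (a - 1) * (ℓ - 1)) := by
  rw [orbitSizes_quadraticAlgebra, ← Nat.totient_prime_pow Fact.out (Nat.pos_of_ne_zero ha)]
  exact isLeast_unitOrbitSizes_of_root hr

theorem isLeast_of_splitsIn [Fact ℓ.Prime] (ha : a ≠ 0)
    (split : SplitsIn (QuadraticAlgebra ℤ m t) ℓ) :
    IsLeast (orbitSizes (QuadraticAlgebra ℤ m t) (ℓ ^ a)) (ℓ ^ (a - 1) * (ℓ - 1)) := by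
  obtain ⟨s, hs⟩ := exists_root_of_splitsIn ha split
  exact isLeast_of_root ha hs

/-- The reduction `ℤ[ω] / ℓ ^ a → ℤ[ω] / ℓ`. -/
def reducePow (m t : ℤ) (ha : a ≠ 0) :
    QuadraticAlgebra (ZMod (ℓ ^ a)) m t →+* QuadraticAlgebra (ZMod ℓ) m t :=
  quadraticMap (ZMod.castHom (dvd_pow_self ℓ ha) (ZMod ℓ)) (map_intCast _ m) (map_intCast _ t)

theorem reducePow_surjective (m t : ℤ) (ha : a ≠ 0) :
    Function.Surjective (reducePow (ℓ := ℓ) m t ha) :=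
  quadraticMap_surjective (ZMod.castHom_surjective _) _ _

theorem isLocalHom_reducePow (m t : ℤ) (ha : a ≠ 0) : IsLocalHom (reducePow (ℓ := ℓ) m t ha) :=
  have := isLocalHom_castHom_pow ℓ ha
  isLocalHom_quadraticMap _ _ _

theorem isLocalRing_and_card_units_of_surjective [NeZero ℓ] {k : Type*} [Field k]
    (φ : QuadraticAlgebra (ZMod ℓ) m t →+* k) [IsLocalHom φ] (hφ : Function.Surjective φ)
    (ha : a ≠ 0) :
    IsLocalRing (QuadraticAlgebra (ZMod (ℓ ^ a)) m t) ∧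
      Nat.card (QuadraticAlgebra (ZMod (ℓ ^ a)) m t)ˣ * Nat.card k =
        ℓ ^ (2 * a) * (Nat.card k - 1) := by
  have := isLocalHom_reducePow (ℓ := ℓ) m t ha
  refine ⟨RingHom.domain_isLocalRing (φ.comp (reducePow m t ha)), ?_⟩
  rw [card_units_mul_card_of_surjective (φ.comp (reducePow m t ha))
    (hφ.comp (reducePow_surjective m t ha)), card_quadraticAlgebra, Nat.card_zmod, ← pow_mul,
    mul_comm a]

theorem card_orbit_reduceMod {n : ℕ} [NeZero n] [IsLocalRing (QuadraticAlgebra (ZMod n) m t)]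
    {z : QuadraticAlgebra ℤ m t} (hz : addOrderOf (reduceMod n m t z) = n) :
    Nat.card (MulAction.orbit (QuadraticAlgebra (ZMod n) m t)ˣ (reduceMod n m t z)) *
      Int.gcd n z.norm = Nat.card (QuadraticAlgebra (ZMod n) m t)ˣ := by
  have ne_zero : reduceMod n m t z ≠ 0 := fun h ↦ by
    rw [h, addOrderOf_zero] at hz
    subst hz
    exact zero_ne_one (Subsingleton.elim (0 : QuadraticAlgebra (ZMod 1) m t) 1)
  rw [← card_orbit_mul_card_annihilator ne_zero, card_annihilator_of_isCoprime
    (addOrderOf_eq_iff_isCoprime.mp hz), norm_reduceMod, card_annihilator_intCast]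

/-- Elements of `ℤ[ω]`, `ω ^ 2 = m + t * ω`, that are not divisible by `ℓ` have norm of `ℓ`-adic
valuation at most `M`. -/
def PrimitiveNormBound (ℓ M : ℕ) (m t : ℤ) : Prop :=
  ∀ z : QuadraticAlgebra ℤ m t, (ℓ : ℤ) ^ (M + 1) ∣ z.norm → (ℓ : QuadraticAlgebra ℤ m t) ∣ z

theorem gcd_norm_dvd_of_norm_bound [Fact ℓ.Prime] (ha : a ≠ 0)
    (bound : PrimitiveNormBound ℓ M m t)
    {z : QuadraticAlgebra ℤ m t} (hz : addOrderOf (reduceMod (ℓ ^ a) m t z) = ℓ ^ a) :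
    Int.gcd (ℓ ^ a : ℕ) z.norm ∣ ℓ ^ M := by
  obtain ⟨j, -, hj⟩ := (Nat.dvd_prime_pow Fact.out).mp
    (Int.gcd_dvd_natAbs_left (ℓ ^ a : ℕ) z.norm)
  rw [hj]
  refine pow_dvd_pow ℓ (le_of_not_gt fun hMj ↦ ?_)
  have dvd_norm : (ℓ : ℤ) ^ (M + 1) ∣ z.norm :=
    (pow_dvd_pow _ hMj).trans (by exact_mod_cast hj ▸ Int.gcd_dvd_right _ _)
  obtain ⟨w, rfl⟩ := bound z dvd_norm
  have order_dvd : addOrderOf (reduceMod (ℓ ^ a) m t (ℓ * w)) ∣ ℓ ^ (a - 1) := by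
    rw [addOrderOf_dvd_iff_nsmul_eq_zero, ← map_nsmul, reduceMod_eq_zero_iff]
    exact ⟨w, by rw [nsmul_eq_mul, ← mul_assoc, ← Nat.cast_mul, pow_sub_one_mul ha]⟩
  rw [hz, Nat.pow_dvd_pow_iff_le_right (Nat.Prime.one_lt Fact.out)] at order_dvd
  omega

theorem isLeast_of_norm_bound [Fact ℓ.Prime] [IsLocalRing (QuadraticAlgebra (ZMod (ℓ ^ a)) m t)]
    (ha : a ≠ 0) (hM : M ≤ a) {z₀ : QuadraticAlgebra ℤ m t} (coprime : IsCoprime z₀.re z₀.im)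
    (dvd_norm : (ℓ : ℤ) ^ M ∣ z₀.norm)
    (bound : PrimitiveNormBound ℓ M m t)
    (hc : Nat.card (QuadraticAlgebra (ZMod (ℓ ^ a)) m t)ˣ = c * ℓ ^ M) :
    IsLeast (orbitSizes (QuadraticAlgebra ℤ m t) (ℓ ^ a)) c := by
  have hℓM : 0 < ℓ ^ M := pow_pos (Nat.Prime.pos Fact.out) M
  rw [orbitSizes_quadraticAlgebra]
  constructor
  · have order : addOrderOf (reduceMod (ℓ ^ a) m t z₀) = ℓ ^ a :=
      addOrderOf_eq_iff_isCoprime.mpr (coprime.map (Int.castRingHom (ZMod (ℓ ^ a))))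
    have gcd_eq : Int.gcd (ℓ ^ a : ℕ) z₀.norm = ℓ ^ M :=
      Nat.dvd_antisymm (gcd_norm_dvd_of_norm_bound ha bound order) <|
        Int.dvd_gcd (mod_cast pow_dvd_pow ℓ hM) (mod_cast dvd_norm)
    refine ⟨_, order, Nat.eq_of_mul_eq_mul_right hℓM ?_⟩
    rw [← gcd_eq, card_orbit_reduceMod order, hc, gcd_eq]
  · rintro _ ⟨P, hP, rfl⟩
    obtain ⟨z, rfl⟩ := reduceMod_surjective _ m t P
    have gcd_le := Nat.le_of_dvd hℓM (gcd_norm_dvd_of_norm_bound ha bound hP)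
    refine Nat.le_of_mul_le_mul_right ?_ hℓM
    rw [← hc, ← card_orbit_reduceMod hP]
    gcongr

end LocalAtPrime

section NormBounds

variable {m t : ℤ} {ℓ e f : ℕ}

theorem primitiveNormBound_of_inertIn [Fact ℓ.Prime]
    (inert : InertIn (QuadraticAlgebra ℤ m t) ℓ) : PrimitiveNormBound ℓ 0 m t := by
  intro z hz
  have : Fact (∀ r : ZMod ℓ, r ^ 2 ≠ m + t * r) := ⟨inertIn_iff.mp inert⟩
  rwa [← reduceMod_eq_zero_iff, ← QuadraticAlgebra.norm_eq_zero_iff_eq_zero, norm_reduceMod,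
    ZMod.intCast_zmod_eq_zero_iff_dvd, ← pow_one (ℓ : ℤ)]

theorem dvd_of_sq_eq_mul_sub {B : Type*} [CommRing B] [IsDomain B] [IsIntegrallyClosed B]
    {c z T N : B} (hc : c ≠ 0) (hz : z ^ 2 = c * T * z - c ^ 2 * N) : c ∣ z := by
  have hc' : algebraMap B (FractionRing B) c ≠ 0 := by simpa using hc
  let x := algebraMap B (FractionRing B) z / algebraMap B (FractionRing B) c
  have integral : IsIntegral B x := by
    open Polynomial in
    refine ⟨X ^ 2 - C T * X + C N, by monicity!, ?_⟩
    have hz' := congrArg (algebraMap B (FractionRing B)) hz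
    simp only [map_pow, map_sub, map_mul] at hz'
    simp only [eval₂_add, eval₂_sub, eval₂_pow, eval₂_X, eval₂_mul, eval₂_C, x]
    field_simp
    linear_combination hz'
  obtain ⟨y, hy⟩ := IsIntegrallyClosed.algebraMap_eq_of_integral integral
  refine ⟨y, IsFractionRing.injective B (FractionRing B) ?_⟩
  rw [map_mul, hy, mul_div_cancel₀ _ hc']

theorem dvd_trace_of_dvd_norm [Fact ℓ.Prime] {s : ZMod ℓ} (hs : s ^ 2 = m + t * s)
    (double : 2 * s = t) {z : QuadraticAlgebra ℤ m t} (hz : (ℓ : ℤ) ∣ z.norm) :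
    (ℓ : ℤ) ∣ z.trace := by
  rw [← ZMod.intCast_zmod_eq_zero_iff_dvd] at hz ⊢
  rw [← norm_reduceMod, norm_eq_evalRoot_sq hs double, sq_eq_zero_iff, evalRoot_apply] at hz
  rw [QuadraticAlgebra.trace_def]
  push_cast
  rw [← double]
  have hz' : (z.re : ZMod ℓ) + z.im * s = 0 := hz
  linear_combination 2 * hz'

theorem primitiveNormBound_of_double_root [Fact ℓ.Prime] [IsDomain (QuadraticAlgebra ℤ m t)]
    [IsIntegrallyClosed (QuadraticAlgebra ℤ m t)] {s : ZMod ℓ} (hs : s ^ 2 = m + t * s)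
    (double : 2 * s = t) : PrimitiveNormBound ℓ 1 m t := by
  intro z hz
  obtain ⟨T, hT⟩ := dvd_trace_of_dvd_norm hs double ((dvd_pow_self _ two_ne_zero).trans hz)
  obtain ⟨N, hN⟩ := hz
  have hℓ : (ℓ : QuadraticAlgebra ℤ m t) ≠ 0 := Nat.cast_ne_zero.mpr (Nat.Prime.ne_zero Fact.out)
  refine dvd_of_sq_eq_mul_sub (T := (T : QuadraticAlgebra ℤ m t)) (N := N) hℓ ?_
  rw [QuadraticAlgebra.sq_eq_trace_smul_sub_norm, hT, hN]
  simp [Algebra.smul_def]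

theorem PrimitiveNormBound.pow_dvd [Fact ℓ.Prime] (bound : PrimitiveNormBound ℓ e m t) (j : ℕ)
    {z : QuadraticAlgebra ℤ m t} (hz : (ℓ : ℤ) ^ (2 * j + e + 1) ∣ z.norm) :
    ((ℓ ^ (j + 1) : ℕ) : QuadraticAlgebra ℤ m t) ∣ z := by
  induction j generalizing z with
  | zero => simpa using bound z (by simpa using hz)
  | succ j ih =>
    obtain ⟨w, rfl⟩ := bound z ((pow_dvd_pow _ (by omega)).trans hz)
    have hℓ : (ℓ : ℤ) ^ 2 ≠ 0 := pow_ne_zero 2 (Nat.cast_ne_zero.mpr (Nat.Prime.ne_zero Fact.out))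
    rw [map_mul, QuadraticAlgebra.norm_natCast,
      show 2 * (j + 1) + e + 1 = 2 + (2 * j + e + 1) by omega, pow_add,
      mul_dvd_mul_iff_left hℓ] at hz
    rw [pow_succ', Nat.cast_mul]
    exact mul_dvd_mul_left _ (ih hz)

theorem dvd_of_pow_factorization_succ_dvd_mul [Fact ℓ.Prime] (hf : f ≠ 0) {x : ℤ}
    (h : ((ℓ ^ (f.factorization ℓ + 1) : ℕ) : ℤ) ∣ f * x) : (ℓ : ℤ) ∣ x := by
  have hℓ : ℓ.Prime := Fact.out
  rw [Int.natCast_dvd, Int.natAbs_mul, Int.natAbs_natCast] at h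
  rw [Int.natCast_dvd]
  refine by_contra fun hx ↦ Nat.pow_succ_factorization_not_dvd hf hℓ ?_
  exact (((hℓ.coprime_iff_not_dvd.mpr hx).pow_left _).dvd_mul_right).mp h

theorem PrimitiveNormBound.scale [Fact ℓ.Prime] (bound : PrimitiveNormBound ℓ e m t)
    (hf : f ≠ 0) :
    PrimitiveNormBound ℓ (2 * f.factorization ℓ + e) (f ^ 2 * m) (f * t) := by
  intro z hz
  rw [← norm_scaleHom] at hz
  have dvd := natCast_dvd_iff.mp (bound.pow_dvd _ hz)
  rw [scaleHom_apply] at dvd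
  obtain ⟨dvd_re, dvd_im⟩ := dvd
  exact natCast_dvd_iff.mpr
    ⟨(Int.natCast_dvd_natCast.mpr (dvd_pow_self ℓ (Nat.succ_ne_zero _))).trans dvd_re,
      dvd_of_pow_factorization_succ_dvd_mul hf dvd_im⟩

end NormBounds

section Orders

variable {m t : ℤ} {ℓ a M f : ℕ}

theorem isLeast_of_inertIn [Fact ℓ.Prime] (ha : a ≠ 0)
    (inert : InertIn (QuadraticAlgebra ℤ m t) ℓ) :
    IsLeast (orbitSizes (QuadraticAlgebra ℤ m t) (ℓ ^ a)) (ℓ ^ (2 * a - 2) * (ℓ ^ 2 - 1)) := by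
  have hℓ : 0 < ℓ := Nat.Prime.pos Fact.out
  have : Fact (∀ r : ZMod ℓ, r ^ 2 ≠ m + t * r) := ⟨inertIn_iff.mp inert⟩
  obtain ⟨_, card_units⟩ := isLocalRing_and_card_units_of_surjective
    (RingHom.id (QuadraticAlgebra (ZMod ℓ) m t)) Function.surjective_id ha
  rw [card_quadraticAlgebra, Nat.card_zmod] at card_units
  refine isLeast_of_norm_bound ha (Nat.zero_le a) (z₀ := 1) isCoprime_one_left (by simp)
    (primitiveNormBound_of_inertIn inert) (Nat.eq_of_mul_eq_mul_right (pow_pos hℓ 2) ?_)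
  rw [card_units, pow_zero, mul_one, mul_right_comm, ← pow_add, Nat.sub_add_cancel (by omega)]

theorem isLeast_of_double_root [Fact ℓ.Prime] (ha : a ≠ 0) {s : ZMod ℓ}
    (hs : s ^ 2 = m + t * s) (double : 2 * s = t) (hM : M ≤ a)
    (bound : PrimitiveNormBound ℓ M m t) {z₀ : QuadraticAlgebra ℤ m t}
    (coprime : IsCoprime z₀.re z₀.im) (dvd_norm : (ℓ : ℤ) ^ M ∣ z₀.norm) :
    IsLeast (orbitSizes (QuadraticAlgebra ℤ m t) (ℓ ^ a)) (ℓ ^ (2 * a - M - 1) * (ℓ - 1)) := by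
  have := isLocalHom_evalRoot hs double
  obtain ⟨_, card_units⟩ := isLocalRing_and_card_units_of_surjective
    (evalRoot hs).toRingHom (evalRoot_surjective hs) ha
  rw [Nat.card_zmod] at card_units
  refine isLeast_of_norm_bound ha hM coprime dvd_norm bound
    (Nat.eq_of_mul_eq_mul_right (Nat.Prime.pos (p := ℓ) Fact.out) ?_)
  rw [card_units, mul_assoc, ← pow_succ, mul_right_comm, ← pow_add]
  congr 2
  omega

theorem pow_two_mul_factorization_dvd_sq (ℓ f : ℕ) :
    (ℓ : ℤ) ^ (2 * f.factorization ℓ) ∣ (f : ℤ) ^ 2 := by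
  rw [mul_comm, pow_mul]
  exact pow_dvd_pow_of_dvd (mod_cast Nat.ordProj_dvd f ℓ) 2

theorem pow_dvd_norm_of_root (f : ℕ) {s : ℤ} (hs : (s : ZMod ℓ) ^ 2 = m + t * s) :
    (ℓ : ℤ) ^ (2 * f.factorization ℓ + 1) ∣ (f * s) ^ 2 - (f ^ 2 * m + f * t * (f * s)) := by
  have dvd : (ℓ : ℤ) ∣ s ^ 2 - (m + t * s) := by
    rw [← ZMod.intCast_zmod_eq_zero_iff_dvd]
    push_cast
    exact sub_eq_zero.mpr hs
  have factor : (f * s) ^ 2 - (f ^ 2 * m + f * t * (f * s)) =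
      (f : ℤ) ^ 2 * (s ^ 2 - (m + t * s)) := by ring
  rw [factor, pow_succ]
  exact mul_dvd_mul (pow_two_mul_factorization_dvd_sq ℓ f) dvd

theorem isLeast_scale_of_splitsIn [Fact ℓ.Prime] (ha : a ≠ 0)
    (split : SplitsIn (QuadraticAlgebra ℤ m t) ℓ) :
    IsLeast (orbitSizes (QuadraticAlgebra ℤ (f ^ 2 * m) (f * t)) (ℓ ^ a))
      (ℓ ^ (a - 1) * (ℓ - 1)) := by
  obtain ⟨s, hs⟩ := exists_root_of_splitsIn ha split
  exact isLeast_of_root ha (r := f * s) (by push_cast; exact root_scale _ hs)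

theorem isLeast_scale_of_le_two_mul [Fact ℓ.Prime] (ha : a ≠ 0) (hk : a ≤ 2 * f.factorization ℓ) :
    IsLeast (orbitSizes (QuadraticAlgebra ℤ (f ^ 2 * m) (f * t)) (ℓ ^ a))
      (ℓ ^ (a - 1) * (ℓ - 1)) := by
  refine isLeast_of_root ha (r := 0) ?_
  have dvd : ((ℓ ^ a : ℕ) : ℤ) ∣ f ^ 2 * m := by
    push_cast
    exact (pow_dvd_pow _ hk).trans ((pow_two_mul_factorization_dvd_sq ℓ f).mul_right m)
  rw [(ZMod.intCast_zmod_eq_zero_iff_dvd _ _).mpr dvd]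
  ring

theorem isLeast_scale_of_inertIn [Fact ℓ.Prime] (hf : f ≠ 0) (hℓf : ℓ ∣ f)
    (inert : InertIn (QuadraticAlgebra ℤ m t) ℓ) (hk : 2 * f.factorization ℓ < a) :
    IsLeast (orbitSizes (QuadraticAlgebra ℤ (f ^ 2 * m) (f * t)) (ℓ ^ a))
      (ℓ ^ (2 * a - 2 * f.factorization ℓ - 1) * (ℓ - 1)) := by
  have f_zero : (f : ZMod ℓ) = 0 := (ZMod.natCast_eq_zero_iff f ℓ).mpr hℓf
  refine isLeast_of_double_root (by omega) (s := 0) (by simp [f_zero]) (by simp [f_zero]) hk.le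
    ((primitiveNormBound_of_inertIn inert).scale hf) (z₀ := QuadraticAlgebra.omega)
    isCoprime_one_right ?_
  have norm_omega : (QuadraticAlgebra.omega : QuadraticAlgebra ℤ (f ^ 2 * m) (f * t)).norm =
      f ^ 2 * -m := by
    simp [QuadraticAlgebra.norm_def]
  rw [norm_omega]
  exact (pow_two_mul_factorization_dvd_sq ℓ f).mul_right _

theorem isLeast_scale_of_double_root_of_le [Fact ℓ.Prime] (ha : a ≠ 0) {s : ZMod ℓ}
    (hs : s ^ 2 = m + t * s) (hk : a ≤ 2 * f.factorization ℓ + 1) :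
    IsLeast (orbitSizes (QuadraticAlgebra ℤ (f ^ 2 * m) (f * t)) (ℓ ^ a))
      (ℓ ^ (a - 1) * (ℓ - 1)) := by
  obtain ⟨s, rfl⟩ := ZMod.intCast_surjective s
  refine isLeast_of_root ha (r := (f * s : ℤ)) (sub_eq_zero.mp ?_)
  have dvd : ((ℓ ^ a : ℕ) : ℤ) ∣ (f * s) ^ 2 - (f ^ 2 * m + f * t * (f * s)) := by
    push_cast
    exact (pow_dvd_pow _ hk).trans (pow_dvd_norm_of_root f hs)
  exact_mod_cast (ZMod.intCast_zmod_eq_zero_iff_dvd _ _).mpr dvd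

theorem isLeast_scale_of_double_root [Fact ℓ.Prime] [IsDomain (QuadraticAlgebra ℤ m t)]
    [IsIntegrallyClosed (QuadraticAlgebra ℤ m t)] (hf : f ≠ 0) {s : ZMod ℓ}
    (hs : s ^ 2 = m + t * s) (double : 2 * s = t) (hk : 2 * f.factorization ℓ + 1 ≤ a) :
    IsLeast (orbitSizes (QuadraticAlgebra ℤ (f ^ 2 * m) (f * t)) (ℓ ^ a))
      (ℓ ^ (2 * a - 2 * f.factorization ℓ - 2) * (ℓ - 1)) := by
  have bound := (primitiveNormBound_of_double_root hs double).scale hf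
  obtain ⟨s, rfl⟩ := ZMod.intCast_surjective s
  have dvd_norm : (ℓ : ℤ) ^ (2 * f.factorization ℓ + 1) ∣
      (⟨-(f * s), 1⟩ : QuadraticAlgebra ℤ (f ^ 2 * m) (f * t)).norm := by
    convert pow_dvd_norm_of_root f hs using 1
    rw [QuadraticAlgebra.norm_def]
    ring
  have least := isLeast_of_double_root (by omega) (s := (f : ZMod ℓ) * (s : ZMod ℓ))
    (by push_cast; exact root_scale _ hs) (by push_cast; rw [← double]; ring) hk bound
    isCoprime_one_right dvd_norm
  rwa [Nat.sub_sub, add_assoc, ← Nat.sub_sub] at least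

end Orders

section NumberFields

variable {K : Type*} [Field K] [NumberField K]

theorem exists_ringEquiv_quadraticAlgebra (hK : Module.finrank ℚ K = 2) :
    ∃ m t : ℤ, Nonempty (𝓞 K ≃+* QuadraticAlgebra ℤ m t) := by
  obtain ⟨m, t, ⟨e⟩⟩ := exists_algEquiv_quadraticAlgebra
    (Module.finBasisOfFinrankEq ℤ (𝓞 K) ((RingOfIntegers.rank K).trans hK))
  exact ⟨m, t, ⟨e.toRingEquiv⟩⟩

theorem nonempty_ringEquiv_of_isOrderOfConductor {m t : ℤ} (e : 𝓞 K ≃+* QuadraticAlgebra ℤ m t)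
    {f : ℕ} (hf : f ≠ 0) {O : Subalgebra ℤ K} (hO : IsOrderOfConductor K f O) :
    Nonempty (O ≃+* QuadraticAlgebra ℤ (f ^ 2 * m) (f * t)) := by
  let ι : QuadraticAlgebra ℤ m t →ₐ[ℤ] K := ((algebraMap (𝓞 K) K).comp e.symm).toIntAlgHom
  have ι_injective : Function.Injective ι :=
    (FaithfulSMul.algebraMap_injective (𝓞 K) K).comp e.symm.injective
  have range_eq : (ι.comp (scaleHom (f : ℤ) m t)).range = O := by
    ext x
    rw [AlgHom.range_comp, Subalgebra.mem_map, hO x]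
    simp only [mem_range_scaleHom]
    constructor
    · rintro ⟨_, ⟨c, y, rfl⟩, rfl⟩
      exact ⟨c, e.symm y, by simp [ι]⟩
    · rintro ⟨c, y, rfl⟩
      exact ⟨_, ⟨c, e y, rfl⟩, by simp [ι]⟩
  have injective := ι_injective.comp (scaleHom_injective (Nat.cast_ne_zero.mpr hf) m t)
  exact ⟨((AlgEquiv.ofInjective (ι.comp (scaleHom (f : ℤ) m t)) injective).trans
    (Subalgebra.equivOfEq _ _ range_eq)).symm.toRingEquiv⟩

end NumberFields

theorem least_orbit_size_general (K : Type*) [Field K] [NumberField K]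
    (hK : Module.finrank ℚ K = 2) (f : ℕ) (hf : 0 < f)
    (O : Subalgebra ℤ K) (hO : IsOrderOfConductor K f O)
    (ℓ : ℕ) (hℓ : ℓ.Prime) (a : ℕ) (ha : a ≠ 0) (k : ℕ) (hk : k = f.factorization ℓ) :
    (¬ ℓ ∣ f → SplitsIn (↥O) ℓ →
      IsLeast (orbitSizes (↥O) (ℓ ^ a)) (ℓ ^ (a - 1) * (ℓ - 1))) ∧
    (¬ ℓ ∣ f → ¬ SplitsIn (↥O) ℓ → ¬ InertIn (↥O) ℓ →
      IsLeast (orbitSizes (↥O) (ℓ ^ a)) (ℓ ^ (2 * a - 2) * (ℓ - 1))) ∧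
    (¬ ℓ ∣ f → InertIn (↥O) ℓ →
      IsLeast (orbitSizes (↥O) (ℓ ^ a)) (ℓ ^ (2 * a - 2) * (ℓ ^ 2 - 1))) ∧
    (ℓ ∣ f → SplitsIn (𝓞 K) ℓ →
      IsLeast (orbitSizes (↥O) (ℓ ^ a)) (ℓ ^ (a - 1) * (ℓ - 1))) ∧
    (ℓ ∣ f → InertIn (𝓞 K) ℓ → a ≤ 2 * k →
      IsLeast (orbitSizes (↥O) (ℓ ^ a)) (ℓ ^ (a - 1) * (ℓ - 1))) ∧
    (ℓ ∣ f → InertIn (𝓞 K) ℓ → 2 * k < a →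
      IsLeast (orbitSizes (↥O) (ℓ ^ a)) (ℓ ^ (2 * a - 2 * k - 1) * (ℓ - 1))) ∧
    (ℓ ∣ f → ¬ SplitsIn (𝓞 K) ℓ → ¬ InertIn (𝓞 K) ℓ → a ≤ 2 * k + 1 →
      IsLeast (orbitSizes (↥O) (ℓ ^ a)) (ℓ ^ (a - 1) * (ℓ - 1))) ∧
    (ℓ ∣ f → ¬ SplitsIn (𝓞 K) ℓ → ¬ InertIn (𝓞 K) ℓ → 2 * k + 1 < a →
      IsLeast (orbitSizes (↥O) (ℓ ^ a)) (ℓ ^ (2 * a - 2 * k - 2) * (ℓ - 1))) := by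
  obtain ⟨m, t, ⟨e⟩⟩ := exists_ringEquiv_quadraticAlgebra hK
  obtain ⟨eO⟩ := nonempty_ringEquiv_of_isOrderOfConductor e hf.ne' hO
  have := Fact.mk hℓ
  have : IsDomain (QuadraticAlgebra ℤ m t) := e.symm.toMulEquiv.isDomain
  have : IsIntegrallyClosed (QuadraticAlgebra ℤ m t) := .of_equiv e
  subst hk
  rw [orbitSizes_congr eO, splitsIn_congr eO, inertIn_congr eO, splitsIn_congr e, inertIn_congr e]
  refine ⟨fun _ ↦ isLeast_of_splitsIn ha, fun hℓf split inert ↦ ?_,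
    fun _ ↦ isLeast_of_inertIn ha, fun _ ↦ isLeast_scale_of_splitsIn ha,
    fun _ _ ↦ isLeast_scale_of_le_two_mul ha, fun hℓf ↦ isLeast_scale_of_inertIn hf.ne' hℓf,
    fun _ split inert ↦ ?_, fun _ split inert hk ↦ ?_⟩
  · rw [splitsIn_scale_iff hℓf] at split
    rw [inertIn_scale_iff hℓf] at inert
    obtain ⟨s, hs, double⟩ := exists_double_root split inert
    have k_zero := Nat.factorization_eq_zero_of_not_dvd hℓf
    simpa [k_zero] using isLeast_scale_of_double_root hf.ne' hs double (a := a) (by omega)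
  · obtain ⟨s, hs, -⟩ := exists_double_root split inert
    exact isLeast_scale_of_double_root_of_le ha hs
  · obtain ⟨s, hs, double⟩ := exists_double_root split inert
    exact isLeast_scale_of_double_root hf.ne' hs double hk.le

/-- The least Cartan orbit size `T̃(O, ℓ^a)` on points of order `ℓ^a`,
for the order `O` of conductor `f` in an imaginary quadratic field `K`, with
`k = ord_ℓ(f)`: case (1) `ℓ ∤ f`, split by the behavior of `ℓ` in `O`; case (2) `ℓ ∣ f`,
split by the behavior of `ℓ` in `O_K` and the comparison of `a` with `2k`, `2k+1`. -/
theorem least_orbit_size (K : Type*) [Field K] [NumberField K]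
    (hK : IsImagQuadratic K) (f : ℕ) (hf : 0 < f)
    (O : Subalgebra ℤ K) (hO : IsOrderOfConductor K f O)
    (ℓ : ℕ) (hℓ : ℓ.Prime) (a : ℕ) (ha : 2 < ℓ ^ a) (k : ℕ) (hk : k = f.factorization ℓ) :
    (¬ ℓ ∣ f → SplitsIn (↥O) ℓ →
      IsLeast (orbitSizes (↥O) (ℓ ^ a)) (ℓ ^ (a - 1) * (ℓ - 1))) ∧
    (¬ ℓ ∣ f → ¬ SplitsIn (↥O) ℓ → ¬ InertIn (↥O) ℓ →
      IsLeast (orbitSizes (↥O) (ℓ ^ a)) (ℓ ^ (2 * a - 2) * (ℓ - 1))) ∧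
    (¬ ℓ ∣ f → InertIn (↥O) ℓ →
      IsLeast (orbitSizes (↥O) (ℓ ^ a)) (ℓ ^ (2 * a - 2) * (ℓ ^ 2 - 1))) ∧
    (ℓ ∣ f → SplitsIn (𝓞 K) ℓ →
      IsLeast (orbitSizes (↥O) (ℓ ^ a)) (ℓ ^ (a - 1) * (ℓ - 1))) ∧
    (ℓ ∣ f → InertIn (𝓞 K) ℓ → a ≤ 2 * k →
      IsLeast (orbitSizes (↥O) (ℓ ^ a)) (ℓ ^ (a - 1) * (ℓ - 1))) ∧
    (ℓ ∣ f → InertIn (𝓞 K) ℓ → 2 * k < a →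
      IsLeast (orbitSizes (↥O) (ℓ ^ a)) (ℓ ^ (2 * a - 2 * k - 1) * (ℓ - 1))) ∧
    (ℓ ∣ f → ¬ SplitsIn (𝓞 K) ℓ → ¬ InertIn (𝓞 K) ℓ → a ≤ 2 * k + 1 →
      IsLeast (orbitSizes (↥O) (ℓ ^ a)) (ℓ ^ (a - 1) * (ℓ - 1))) ∧
    (ℓ ∣ f → ¬ SplitsIn (𝓞 K) ℓ → ¬ InertIn (𝓞 K) ℓ → 2 * k + 1 < a →
      IsLeast (orbitSizes (↥O) (ℓ ^ a)) (ℓ ^ (2 * a - 2 * k - 2) * (ℓ - 1))) :=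
  least_orbit_size_general K hK.1 f hf O hO ℓ hℓ a (by rintro rfl; simp at ha) k hk
end
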